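/- For every Λ > 0 there exists a constant C > 0, depending only on φ and Λ, with the following property. Let r > 0 and let x₁, x₂ ∈ ℝ⁴ with 0 < |x₁−x₂| ≤ r/4; suppose u is harmonic on an open set containing the closed ball B̄_{x₁}(6r); suppose that for i = 1,2 one has H_φ(x_i,t) > 0 and N_φ(x_i,t) ≤ Λ for all t ∈ (0, 4r]; let x be a point on the segment from x₁ to x₂ with H_φ(x',r) > 0 for all x' on that segment, and let v = (x₂−x₁)/|x₂−x₁|. Then |x₁−x₂| · |∂_v N_φ(x,r)| ≤ C·(√(W_{r/4}^{4r}(x₁)) + √(W_{r/4}^{4r}(x₂))). -/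

import Mathlib

open Metric MeasureTheory
open scoped RealInnerProductSpace

noncomputable section

abbrev E4 := EuclideanSpace ℝ (Fin 4)

variable {E : Type*} [NormedAddCommGroup E] [InnerProductSpace ℝ E] [FiniteDimensional ℝ E]

/-- `u` is smooth and harmonic (the Laplacian, i.e. the sum of the pure second
derivatives in the coordinate directions, vanishes) on `Ω`. -/
def IsHarmonicOn (u : E4 → E) (Ω : Set E4) : Prop :=
  ContDiffOn ℝ (⊤ : ℕ∞) u Ω ∧
  ∀ x ∈ Ω, ∑ i : Fin 4,
    iteratedFDeriv ℝ 2 u x ![EuclideanSpace.single i (1:ℝ), EuclideanSpace.single i 1] = 0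

/-- `|∇u(y)|²`, the squared Frobenius norm of the derivative of `u` at `y`. -/
def gradSq (u : E4 → E) (y : E4) : ℝ :=
  ∑ i : Fin 4, ‖fderiv ℝ u y (EuclideanSpace.single i (1:ℝ))‖ ^ 2

/-- `D_φ(x,r) = ∫ |∇u(y)|² φ(|y−x|/r) dy`. -/
def Dphi (φ : ℝ → ℝ) (u : E4 → E) (x : E4) (r : ℝ) : ℝ :=
  ∫ y, gradSq u y * φ (‖y - x‖ / r)

/-- `H_φ(x,r) = −∫ |u(y)|² |y−x|⁻¹ φ'(|y−x|/r) dy`. -/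
def Hphi (φ : ℝ → ℝ) (u : E4 → E) (x : E4) (r : ℝ) : ℝ :=
  -∫ y, ‖u y‖ ^ 2 * ‖y - x‖⁻¹ * deriv φ (‖y - x‖ / r)

/-- `E_φ(x,r) = −∫ |∂_{ν_x}u(y)|² |y−x| φ'(|y−x|/r) dy`, where `ν_x(y) = (y−x)/|y−x|`. -/
def Ephi (φ : ℝ → ℝ) (u : E4 → E) (x : E4) (r : ℝ) : ℝ :=
  -∫ y, ‖fderiv ℝ u y (‖y - x‖⁻¹ • (y - x))‖ ^ 2 * ‖y - x‖ * deriv φ (‖y - x‖ / r)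

/-- The smoothed frequency `N_φ(x,r) = r D_φ(x,r) / H_φ(x,r)`. -/
def Nphi (φ : ℝ → ℝ) (u : E4 → E) (x : E4) (r : ℝ) : ℝ :=
  r * Dphi φ u x r / Hphi φ u x r

/-!
The derivative of the frequency along a variation of `u` is `2 / H` times the shell pairing of the
homogeneity defect `Q = ∂_{y - x} u - N u` with the variation, and `Q` is orthogonal to `u`. For
dilations this gives the monotonicity of `N` and expresses the pinching `N(4r) - N(r/4)` as an
integral over scales of squared defects, so some scale in `(2r, 4r)` carries a defect about `xᵢ`
that is bounded by the pinching at `xᵢ`. The defect about `xᵢ` is harmonic, so this bound passes to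
the ball of radius `r` about `x`, and the bound on the frequency makes the heights at `x` and `xᵢ`
comparable.

On the segment, both `Q` and the variation `∂_{x₂ - x₁} u` are combinations of the defects about
`x₁` and `x₂` modulo multiples of `u`, which the orthogonality discards. Hence `|x₁ - x₂| |∂_v N|`
is at most a constant times `(√W₁ + √W₂) ^ 2`, and `Wᵢ ≤ Λ` turns the square into a linear bound.
-/

section Development

open InnerProductSpace

section RadialWeights

/-- A continuous weight on a normed space that vanishes outside the open unit ball. -/
structure IsBallWeight {V : Type*} [NormedAddCommGroup V] (ψ : V → ℝ) : Prop where
  continuous : Continuous ψ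
  eq_zero : ∀ z, 1 ≤ ‖z‖ → ψ z = 0

/-- The function `g` is a potential, supported in the unit ball, of the radial vector field
`z ↦ -ψ z • z`. -/
structure IsRadialPotential {V : Type*} [NormedAddCommGroup V] [InnerProductSpace ℝ V]
    (g ψ : V → ℝ) : Prop where
  density : IsBallWeight ψ
  eq_zero : ∀ z, 1 ≤ ‖z‖ → g z = 0
  hasFDerivAt : ∀ z, HasFDerivAt g (-ψ z • innerSL ℝ z) z

/-- The class of cutoff profiles used to smooth the frequency function. -/
structure IsRadialCutoff (φ : ℝ → ℝ) : Prop where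
  contDiff : ContDiff ℝ 1 φ
  antitone : Antitone φ
  eq_one : ∀ t ≤ (3 / 4 : ℝ), φ t = 1
  eq_zero : ∀ t, 1 ≤ t → φ t = 0

/-- The weight `-φ'(|z|) / |z|` of the height functional. -/
def shellWeight {V : Type*} [NormedAddCommGroup V] (φ : ℝ → ℝ) (z : V) : ℝ :=
  -deriv φ ‖z‖ * ‖z‖⁻¹

/-- The radial potential of `z ↦ -f |z| • z` that vanishes on the unit sphere. -/
def radialPotential {V : Type*} [NormedAddCommGroup V] (f : ℝ → ℝ) (z : V) : ℝ :=
  2⁻¹ * ∫ q in ‖z‖ ^ 2..1, f √q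

variable {V : Type*} [NormedAddCommGroup V] {φ : ℝ → ℝ}

lemma IsBallWeight.integrable_mul [ProperSpace V] [MeasurableSpace V] [BorelSpace V]
    {μ : Measure V} [IsFiniteMeasureOnCompacts μ] {ψ k : V → ℝ} (hψ : IsBallWeight ψ)
    (hk : Continuous k) : Integrable (fun z ↦ k z * ψ z) μ := by
  refine (hk.mul hψ.continuous).integrable_of_hasCompactSupport ?_
  refine HasCompactSupport.intro (isCompact_closedBall 0 1) fun z hz ↦ ?_
  rw [mem_closedBall_zero_iff, not_le] at hz
  rw [Pi.mul_apply, hψ.eq_zero z hz.le, mul_zero]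

lemma IsBallWeight.exists_le [ProperSpace V] {ψ : V → ℝ} (hψ : IsBallWeight ψ) :
    ∃ M > 0, ∀ z, ψ z ≤ M := by
  obtain ⟨B, hB⟩ := (isCompact_closedBall (0 : V) 1).exists_bound_of_continuousOn
    hψ.continuous.continuousOn
  refine ⟨max B 1, by positivity, fun z ↦ ?_⟩
  rcases le_total 1 ‖z‖ with hz | hz
  · rw [hψ.eq_zero z hz]; positivity
  · exact (le_abs_self _).trans ((hB z (mem_closedBall_zero_iff.2 hz)).trans (le_max_left _ _))

lemma isBallWeight_comp_norm {f : ℝ → ℝ} (hf : Continuous f) (hf0 : ∀ t, 1 ≤ t → f t = 0) :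
    IsBallWeight fun z : V ↦ f ‖z‖ :=
  ⟨hf.comp continuous_norm, fun z ↦ hf0 ‖z‖⟩

namespace IsRadialCutoff

lemma isBallWeight (h : IsRadialCutoff φ) : IsBallWeight fun z : V ↦ φ ‖z‖ :=
  isBallWeight_comp_norm h.contDiff.continuous h.eq_zero

lemma nonneg (h : IsRadialCutoff φ) (t : ℝ) : 0 ≤ φ t := by
  rw [← h.eq_zero (max t 1) (le_max_right t 1)]
  exact h.antitone (le_max_left t 1)

lemma deriv_eq_zero_of_one_le (h : IsRadialCutoff φ) {t : ℝ} (ht : 1 ≤ t) : deriv φ t = 0 :=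
  IsLocalMin.deriv_eq_zero <| .of_forall fun s ↦ (h.eq_zero t ht).trans_le (h.nonneg s)

lemma deriv_eq_zero_of_le (h : IsRadialCutoff φ) {t : ℝ} (ht : t ≤ 3 / 4) : deriv φ t = 0 := by
  refine IsLocalMax.deriv_eq_zero <| .of_forall fun s ↦ ?_
  rw [h.eq_one t ht, ← h.eq_one _ (min_le_right s (3 / 4))]
  exact h.antitone (min_le_left s (3 / 4))

lemma shellWeight_nonneg (h : IsRadialCutoff φ) (z : V) : 0 ≤ shellWeight φ z :=
  mul_nonneg (neg_nonneg.2 h.antitone.deriv_nonpos) (inv_nonneg.2 (norm_nonneg z))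

lemma shellWeight_eq_zero_of_norm_le (h : IsRadialCutoff φ) {z : V} (hz : ‖z‖ ≤ 3 / 4) :
    shellWeight φ z = 0 := by
  rw [shellWeight, h.deriv_eq_zero_of_le hz, neg_zero, zero_mul]

lemma isBallWeight_shellWeight (h : IsRadialCutoff φ) :
    IsBallWeight (shellWeight φ : V → ℝ) where
  eq_zero z hz := by rw [shellWeight, h.deriv_eq_zero_of_one_le hz, neg_zero, zero_mul]
  continuous := by
    refine continuous_iff_continuousAt.2 fun z ↦ ?_
    rcases eq_or_ne z 0 with rfl | hz
    · have hnear := closedBall_mem_nhds (0 : V) (by norm_num : (0 : ℝ) < 3 / 4)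
      exact continuousAt_const.congr <| Filter.mem_of_superset hnear fun y hy ↦
        (h.shellWeight_eq_zero_of_norm_le (mem_closedBall_zero_iff.1 hy)).symm
    · have hderiv : Continuous (deriv φ) := h.contDiff.continuous_deriv le_rfl
      exact (hderiv.comp continuous_norm).neg.continuousAt.mul
        (continuous_norm.continuousAt.inv₀ (norm_ne_zero_iff.2 hz))

end IsRadialCutoff

lemma radialPotential_eq_zero {f : ℝ → ℝ} (hf0 : ∀ t, 1 ≤ t → f t = 0) {z : V} (hz : 1 ≤ ‖z‖) :
    radialPotential f z = 0 := by
  have hsq : 1 ≤ ‖z‖ ^ 2 := one_le_pow₀ hz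
  refine mul_eq_zero_of_right _ (intervalIntegral.integral_zero_ae (.of_forall fun q hq ↦ ?_))
  rw [Set.uIoc_of_ge hsq] at hq
  exact hf0 _ (Real.one_le_sqrt.2 hq.1.le)

lemma radialPotential_nonneg {f : ℝ → ℝ} (hf : ∀ t, 0 ≤ f t) (hf0 : ∀ t, 1 ≤ t → f t = 0) (z : V) :
    0 ≤ radialPotential f z := by
  rcases le_total ‖z‖ 1 with hz | hz
  · exact mul_nonneg (by norm_num) <|
      intervalIntegral.integral_nonneg (pow_le_one₀ (norm_nonneg z) hz) fun q _ ↦ hf √q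
  · exact (radialPotential_eq_zero hf0 hz).ge

variable [InnerProductSpace ℝ V]

lemma hasFDerivAt_comp_norm_sq {f : ℝ → ℝ} {f' : ℝ} {z : V} (hf : HasDerivAt f f' (‖z‖ ^ 2)) :
    HasFDerivAt (fun y : V ↦ f (‖y‖ ^ 2)) ((2 * f') • innerSL ℝ z) z := by
  refine (hf.comp_hasFDerivAt z (hasStrictFDerivAt_norm_sq z).hasFDerivAt).congr_fderiv ?_
  module

lemma IsRadialPotential.isBallWeight {g ψ : V → ℝ} (h : IsRadialPotential g ψ) : IsBallWeight g :=
  ⟨continuous_iff_continuousAt.2 fun z ↦ (h.hasFDerivAt z).continuousAt, h.eq_zero⟩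

lemma IsRadialCutoff.isRadialPotential (h : IsRadialCutoff φ) :
    IsRadialPotential (fun z : V ↦ φ ‖z‖) (shellWeight φ) where
  density := h.isBallWeight_shellWeight
  eq_zero z := h.eq_zero ‖z‖
  hasFDerivAt z := by
    rcases eq_or_ne z 0 with rfl | hz
    · have hnear := closedBall_mem_nhds (0 : V) (by norm_num : (0 : ℝ) < 3 / 4)
      refine HasFDerivAt.congr_of_eventuallyEq ?_ <|
        Filter.mem_of_superset hnear fun y hy ↦ h.eq_one _ (mem_closedBall_zero_iff.1 hy)
      simpa using hasFDerivAt_const (1 : ℝ) (0 : V)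
    · have hφ := (h.contDiff.differentiable one_ne_zero ‖z‖).hasDerivAt
      rw [← Real.sqrt_sq (norm_nonneg z)] at hφ
      have hsqrt := Real.hasDerivAt_sqrt (pow_ne_zero 2 (norm_ne_zero_iff.2 hz))
      have := hasFDerivAt_comp_norm_sq (hφ.comp _ hsqrt)
      simp only [Function.comp_apply, Real.sqrt_sq (norm_nonneg _)] at this
      refine this.congr_fderiv ?_
      congr 1
      rw [shellWeight]
      field_simp

lemma isRadialPotential_radialPotential {f : ℝ → ℝ} (hf : Continuous f)
    (hf0 : ∀ t, 1 ≤ t → f t = 0) :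
    IsRadialPotential (radialPotential f : V → ℝ) fun z ↦ f ‖z‖ where
  density := isBallWeight_comp_norm hf hf0
  eq_zero z hz := radialPotential_eq_zero hf0 hz
  hasFDerivAt z := by
    have hc : Continuous fun q ↦ f √q := hf.comp Real.continuous_sqrt
    have hint := intervalIntegral.integral_hasDerivAt_left (hc.intervalIntegrable (‖z‖ ^ 2) 1)
      hc.stronglyMeasurable.stronglyMeasurableAtFilter hc.continuousAt
    refine ((hasFDerivAt_comp_norm_sq hint).const_mul 2⁻¹).congr_fderiv ?_
    rw [Real.sqrt_sq (norm_nonneg z)]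
    module

end RadialWeights

section Green

lemma laplacian_eq_sum_fderiv_fderiv {V F : Type*} [NormedAddCommGroup V] [InnerProductSpace ℝ V]
    [FiniteDimensional ℝ V] [NormedAddCommGroup F] [NormedSpace ℝ F] {ι : Type*} [Fintype ι]
    (b : OrthonormalBasis ι ℝ V) {U : V → F} {z : V} (hU : ContDiffAt ℝ 2 U z) :
    Laplacian.laplacian U z = ∑ i, fderiv ℝ (fun y ↦ fderiv ℝ U y (b i)) z (b i) := by
  have hdiff : DifferentiableAt ℝ (fderiv ℝ U) z :=
    (hU.fderiv_right (m := 1) (by norm_num)).differentiableAt one_ne_zero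
  rw [laplacian_eq_iteratedFDeriv_orthonormalBasis U b]
  refine Finset.sum_congr rfl fun i _ ↦ ?_
  rw [iteratedFDeriv_two_apply, fderiv_clm_apply hdiff (differentiableAt_const _)]
  simp

variable {V F : Type*} [NormedAddCommGroup V] [InnerProductSpace ℝ V]
  [NormedAddCommGroup F] [InnerProductSpace ℝ F]

lemma sum_fderiv_normSq_mul_inner {ι : Type*} [Fintype ι] (b : OrthonormalBasis ι ℝ V) {U : V → F}
    {z : V} (hU : DifferentiableAt ℝ U z) :
    ∑ i, fderiv ℝ (fun y ↦ ‖U y‖ ^ 2 * ⟪b i, y⟫) z (b i)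
      = 2 * ⟪fderiv ℝ U z z, U z⟫ + Module.finrank ℝ V * ‖U z‖ ^ 2 := by
  have hterm (i) : fderiv ℝ (fun y ↦ ‖U y‖ ^ 2 * ⟪b i, y⟫) z (b i)
      = 2 * ⟪fderiv ℝ U z (⟪b i, z⟫ • b i), U z⟫ + ‖U z‖ ^ 2 := by
    have hder := hU.hasFDerivAt.norm_sq.mul ((innerSL ℝ (b i)).hasFDerivAt (x := z))
    refine (congrArg (· (b i)) hder.fderiv).trans ?_
    simp only [coe_innerSL_apply, add_apply, smul_apply, inner_self_eq_norm_sq_to_K,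
      OrthonormalBasis.norm_eq_one, Real.ringHom_apply, one_pow, smul_eq_mul, mul_one,
      ContinuousLinearMap.comp_apply, nsmul_eq_mul, Nat.cast_ofNat, map_smul,
      real_inner_comm (U z), real_inner_smul_right]
    ring
  simp only [hterm, Finset.sum_add_distrib, ← Finset.mul_sum, ← sum_inner, ← map_sum,
    b.sum_repr' z, Finset.sum_const, Finset.card_univ, ← Module.finrank_eq_card_basis b.toBasis,
    nsmul_eq_mul]

variable [FiniteDimensional ℝ V]

/-- The Frobenius inner product of the derivatives of `U` and `W`, computed in an orthonormal
basis. -/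
def gradInner (U W : V → F) (z : V) : ℝ :=
  ∑ i, ⟪fderiv ℝ U z (stdOrthonormalBasis ℝ V i), fderiv ℝ W z (stdOrthonormalBasis ℝ V i)⟫

lemma gradInner_eq_sum {ι : Type*} [Fintype ι] (b : OrthonormalBasis ι ℝ V) (U W : V → F) (z : V) :
    gradInner U W z = ∑ i, ⟪fderiv ℝ U z (b i), fderiv ℝ W z (b i)⟫ := by
  have h := congrArg
    (TensorProduct.lift ((innerₗ F).compl₁₂ (fderiv ℝ U z).toLinearMap (fderiv ℝ W z).toLinearMap))
    (canonicalCovariantTensor_eq_sum V b)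
  simpa [canonicalCovariantTensor, gradInner] using h

lemma gradInner_self_nonneg (U : V → F) (z : V) : 0 ≤ gradInner U U z :=
  Finset.sum_nonneg fun _ _ ↦ real_inner_self_nonneg

variable [MeasurableSpace V] [BorelSpace V] {g ψ : V → ℝ}

lemma IsRadialPotential.integral_fderiv_mul (h : IsRadialPotential g ψ) {k : V → ℝ}
    (hk : ContDiff ℝ 1 k) (v : V) :
    ∫ z, fderiv ℝ k z v * g z = ∫ z, ⟪v, z⟫ * k z * ψ z := by
  have hdg (z : V) : fderiv ℝ g z v = -(⟪v, z⟫ * ψ z) := by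
    rw [(h.hasFDerivAt z).fderiv, smul_apply, innerSL_apply_apply, real_inner_comm, smul_eq_mul]
    ring
  have hcont : Continuous fun z ↦ fderiv ℝ k z v :=
    (hk.continuous_fderiv one_ne_zero).clm_apply continuous_const
  have hint : Integrable fun z ↦ ⟪v, z⟫ * k z * ψ z :=
    h.density.integrable_mul ((continuous_const.inner continuous_id).mul hk.continuous)
  have hparts := integral_mul_fderiv_eq_neg_fderiv_mul_of_integrable (μ := volume) (v := v)
    (f := g) (g := k) (hint.neg.congr (.of_forall fun z ↦ by simp only [hdg, Pi.neg_apply]; ring))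
    ((h.isBallWeight.integrable_mul hcont).congr (.of_forall fun z ↦ mul_comm _ _))
    ((h.isBallWeight.integrable_mul hk.continuous).congr (.of_forall fun z ↦ mul_comm _ _))
    (fun z _ ↦ (h.hasFDerivAt z).differentiableAt) fun z _ ↦ hk.differentiable one_ne_zero z
  calc ∫ z, fderiv ℝ k z v * g z = ∫ z, g z * fderiv ℝ k z v := by simp only [mul_comm]
    _ = ∫ z, -(fderiv ℝ g z v * k z) := by rw [hparts, integral_neg]
    _ = ∫ z, ⟪v, z⟫ * k z * ψ z := integral_congr_ae (.of_forall fun z ↦ by simp only [hdg]; ring)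

lemma IsRadialPotential.integral_divergence_mul (h : IsRadialPotential g ψ) {ι : Type*} [Fintype ι]
    (b : OrthonormalBasis ι ℝ V) {k : ι → V → ℝ} (hk : ∀ i, ContDiff ℝ 1 (k i)) :
    ∫ z, (∑ i, fderiv ℝ (k i) z (b i)) * g z = ∫ z, (∑ i, ⟪b i, z⟫ * k i z) * ψ z := by
  simp only [Finset.sum_mul]
  rw [integral_finsetSum, integral_finsetSum]
  · exact Finset.sum_congr rfl fun i _ ↦ h.integral_fderiv_mul (hk i) (b i)
  · exact fun i _ ↦
      h.density.integrable_mul ((continuous_const.inner continuous_id).mul (hk i).continuous)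
  · exact fun i _ ↦ h.isBallWeight.integrable_mul
      (((hk i).continuous_fderiv one_ne_zero).clm_apply continuous_const)

lemma IsRadialPotential.integral_gradInner_mul (h : IsRadialPotential g ψ) {U W : V → F}
    (hU : ContDiff ℝ 2 U) (hharm : HarmonicOnNhd U (ball 0 1)) (hW : ContDiff ℝ 1 W) :
    ∫ z, gradInner U W z * g z = ∫ z, ⟪fderiv ℝ U z z, W z⟫ * ψ z := by
  let b := stdOrthonormalBasis ℝ V
  have hUi (i) : ContDiff ℝ 1 fun z ↦ fderiv ℝ U z (b i) :=
    (hU.fderiv_right (by norm_num)).clm_apply contDiff_const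
  have hdiv (z : V) (hz : ‖z‖ < 1) :
      ∑ i, fderiv ℝ (fun y ↦ ⟪fderiv ℝ U y (b i), W y⟫) z (b i) = gradInner U W z := by
    have hΔ := (hharm z (mem_ball_zero_iff.2 hz)).2.self_of_nhds
    rw [laplacian_eq_sum_fderiv_fderiv b hU.contDiffAt, Pi.zero_apply] at hΔ
    simp only [fderiv_inner_apply ℝ ((hUi _).differentiable one_ne_zero z)
      (hW.differentiable one_ne_zero z), Finset.sum_add_distrib, ← sum_inner, hΔ, inner_zero_left,
      add_zero]
    rfl
  have hradial (z : V) : ∑ i, ⟪b i, z⟫ * ⟪fderiv ℝ U z (b i), W z⟫ = ⟪fderiv ℝ U z z, W z⟫ := by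
    rw [← congrArg (fderiv ℝ U z) (b.sum_repr' z)]
    simp only [map_sum, map_smul, sum_inner, real_inner_smul_left]
  calc ∫ z, gradInner U W z * g z
      = ∫ z, (∑ i, fderiv ℝ (fun y ↦ ⟪fderiv ℝ U y (b i), W y⟫) z (b i)) * g z := by
        refine integral_congr_ae (.of_forall fun z ↦ ?_)
        rcases lt_or_ge ‖z‖ 1 with hz | hz
        · simp only [hdiv z hz]
        · simp only [h.eq_zero z hz, mul_zero]
    _ = ∫ z, ⟪fderiv ℝ U z z, W z⟫ * ψ z := by
        rw [h.integral_divergence_mul b fun i ↦ (hUi i).inner ℝ hW]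
        simp only [hradial]

end Green

section Height

variable {V F : Type*} [NormedAddCommGroup V] [InnerProductSpace ℝ V] [FiniteDimensional ℝ V]
  [MeasurableSpace V] [BorelSpace V] [NormedAddCommGroup F] [InnerProductSpace ℝ F] {φ : ℝ → ℝ}

/-- The `L²` inner product of `A` and `B` over the shell cut out by `φ`; the (scale-invariant)
height of `U` in the unit ball is `shellInner φ U U`. -/
def shellInner (φ : ℝ → ℝ) (A B : V → F) : ℝ :=
  ∫ z, ⟪A z, B z⟫ * shellWeight φ z

lemma IsRadialCutoff.integral_inner_fderiv_nonneg (h : IsRadialCutoff φ) {U : V → F}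
    (hU : ContDiff ℝ 2 U) (hharm : HarmonicOnNhd U (ball 0 1)) :
    0 ≤ ∫ z, ⟪fderiv ℝ U z z, U z⟫ * φ ‖z‖ := by
  rw [← (isRadialPotential_radialPotential h.contDiff.continuous
    h.eq_zero).integral_gradInner_mul hU hharm (hU.of_le one_le_two)]
  exact integral_nonneg fun z ↦ mul_nonneg (gradInner_self_nonneg U z)
    (radialPotential_nonneg h.nonneg h.eq_zero z)

lemma IsRadialCutoff.finrank_mul_integral_normSq_le (h : IsRadialCutoff φ) {U : V → F}
    (hU : ContDiff ℝ 2 U) (hharm : HarmonicOnNhd U (ball 0 1)) :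
    Module.finrank ℝ V * ∫ z, ‖U z‖ ^ 2 * φ ‖z‖ ≤ shellInner φ U U := by
  let b := stdOrthonormalBasis ℝ V
  have hU1 : ContDiff ℝ 1 U := hU.of_le one_le_two
  have hradial := h.integral_inner_fderiv_nonneg hU hharm
  have hdivergence := h.isRadialPotential.integral_divergence_mul b
    (k := fun i z ↦ ‖U z‖ ^ 2 * ⟪b i, z⟫)
    fun i ↦ (hU1.norm_sq ℝ).mul (contDiff_const.inner ℝ contDiff_id)
  have hint : Integrable fun z ↦ 2 * (⟪fderiv ℝ U z z, U z⟫ * φ ‖z‖) :=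
    (h.isBallWeight.integrable_mul <| ((hU1.continuous_fderiv one_ne_zero).clm_apply
      continuous_id).inner hU1.continuous).const_mul 2
  have hint' : Integrable fun z ↦ Module.finrank ℝ V * (‖U z‖ ^ 2 * φ ‖z‖) :=
    (h.isBallWeight.integrable_mul (hU1.continuous.norm.pow 2)).const_mul _
  calc Module.finrank ℝ V * ∫ z, ‖U z‖ ^ 2 * φ ‖z‖
      ≤ 2 * (∫ z, ⟪fderiv ℝ U z z, U z⟫ * φ ‖z‖) + Module.finrank ℝ V * ∫ z, ‖U z‖ ^ 2 * φ ‖z‖ :=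
        le_add_of_nonneg_left (by positivity)
    _ = ∫ z, (∑ i, fderiv ℝ (fun y ↦ ‖U y‖ ^ 2 * ⟪b i, y⟫) z (b i)) * φ ‖z‖ := by
        rw [← integral_const_mul, ← integral_const_mul, ← integral_add hint hint']
        refine integral_congr_ae (.of_forall fun z ↦ ?_)
        simp only [sum_fderiv_normSq_mul_inner b (hU1.differentiable one_ne_zero z)]
        ring
    _ = ∫ z, ‖z‖ ^ 2 * ⟪U z, U z⟫ * shellWeight φ z := by
        rw [hdivergence]
        refine integral_congr_ae (.of_forall fun z ↦ ?_)
        simp only [← b.sum_sq_inner_right z, real_inner_self_eq_norm_sq, Finset.sum_mul]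
        exact Finset.sum_congr rfl fun i _ ↦ by ring
    _ ≤ shellInner φ U U := by
        have hshell := h.isBallWeight_shellWeight (V := V)
        have hUU := hU1.continuous.inner hU1.continuous (𝕜 := ℝ)
        refine integral_mono (hshell.integrable_mul ((continuous_norm.pow 2).mul hUU))
          (hshell.integrable_mul hUU) fun z ↦ ?_
        rcases le_total 1 ‖z‖ with hz | hz
        · simp only [hshell.eq_zero z hz, mul_zero, le_refl]
        · exact mul_le_mul_of_nonneg_right (mul_le_of_le_one_left real_inner_self_nonneg
            (pow_le_one₀ (norm_nonneg z) hz)) (h.shellWeight_nonneg z)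

end Height

section Rescale

/-- The function `u` in the coordinates `z ↦ x + t • z` centred at `x` with unit length `t`. -/
def rescale {V F : Type*} [NormedAddCommGroup V] [NormedSpace ℝ V] (u : V → F) (x : V) (t : ℝ)
    (z : V) : F :=
  u (x + t • z)

section NormedSpace

variable {V F : Type*} [NormedAddCommGroup V] [NormedSpace ℝ V]

lemma rescale_rescale {u : V → F} (x x' : V) {t : ℝ} (ρ : ℝ) (ht : t ≠ 0) :
    rescale (rescale u x t) (t⁻¹ • (x' - x)) (ρ / t) = rescale u x' ρ := by
  ext z
  simp only [rescale, smul_add, smul_smul, mul_inv_cancel₀ ht, mul_div_cancel₀ ρ ht, one_smul]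
  congr 1
  abel

lemma mem_ball_of_mem_unit_ball {x z : V} {t : ℝ} (ht : 0 < t) (hz : z ∈ ball 0 1) :
    x + t • z ∈ ball x t := by
  rw [mem_ball_zero_iff] at hz
  rw [mem_ball_iff_norm, add_sub_cancel_left, norm_smul, Real.norm_of_nonneg ht.le]
  exact mul_lt_of_lt_one_right ht hz

variable [NormedAddCommGroup F] [NormedSpace ℝ F]

lemma contDiff_rescale {n : WithTop ℕ∞} {u : V → F} (hu : ContDiff ℝ n u) (x : V) (t : ℝ) :
    ContDiff ℝ n (rescale u x t) :=
  hu.comp (contDiff_const.add (contDiff_const.smul contDiff_id))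

lemma fderiv_rescale (u : V → F) (x : V) (t : ℝ) :
    fderiv ℝ (rescale u x t) = t • rescale (fderiv ℝ u) x t := by
  ext1 z
  change fderiv ℝ (fun y ↦ (fun w ↦ u (x + w)) (t • y)) z = _
  rw [fderiv_comp_smul (f := fun w ↦ u (x + w)), fderiv_comp_add_left]
  rfl

end NormedSpace

variable {V F : Type*} [NormedAddCommGroup V] [InnerProductSpace ℝ V] [FiniteDimensional ℝ V]
  [NormedAddCommGroup F]

section Laplacian

variable [NormedSpace ℝ F]

lemma laplacian_rescale (u : V → F) (x : V) (t : ℝ) (z : V) :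
    Laplacian.laplacian (rescale u x t) z = t ^ 2 • Laplacian.laplacian u (x + t • z) := by
  have h2 : fderiv ℝ (fderiv ℝ (rescale u x t)) z = t • t • fderiv ℝ (fderiv ℝ u) (x + t • z) := by
    rw [fderiv_rescale, fderiv_const_smul_field (𝕜 := ℝ) (f := rescale (fderiv ℝ u) x t) t,
      fderiv_rescale]
    rfl
  simp only [laplacian_eq_iteratedFDeriv_stdOrthonormalBasis, iteratedFDeriv_two_apply, h2,
    Finset.smul_sum, smul_smul, sq]
  rfl

lemma harmonicOnNhd_rescale {u : V → F} {x : V} {t : ℝ} (ht : 0 < t)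
    (hu : HarmonicOnNhd u (ball x t)) : HarmonicOnNhd (rescale u x t) (ball 0 1) := by
  intro z hz
  have hux := hu _ (mem_ball_of_mem_unit_ball ht hz)
  have hcont : ContinuousAt (fun y : V ↦ x + t • y) z := by fun_prop
  refine ⟨hux.1.comp z (by fun_prop), (hcont.eventually hux.2).mono fun y hy ↦ ?_⟩
  rw [laplacian_rescale, hy, Pi.zero_apply, smul_zero, Pi.zero_apply]

end Laplacian

lemma gradInner_rescale [InnerProductSpace ℝ F] (u w : V → F) (x : V) (t : ℝ) (z : V) :
    gradInner (rescale u x t) (rescale w x t) z = t ^ 2 * gradInner u w (x + t • z) := by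
  simp only [gradInner, fderiv_rescale, Pi.smul_apply, smul_apply, real_inner_smul_left,
    real_inner_smul_right, Finset.mul_sum, sq, mul_assoc]
  rfl

lemma integral_comp_add_smul [MeasurableSpace V] [BorelSpace V] [NormedSpace ℝ F] (k : V → F)
    (x : V) {t : ℝ} (ht : 0 ≤ t) :
    ∫ z, k (x + t • z) = (t ^ Module.finrank ℝ V)⁻¹ • ∫ y, k y := by
  rw [Measure.integral_comp_smul volume (fun w ↦ k (x + w)), abs_of_nonneg (by positivity),
    integral_add_left_eq_self]

end Rescale

section HeightComparison

variable {V F : Type*} [NormedAddCommGroup V] [InnerProductSpace ℝ V] [FiniteDimensional ℝ V]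
  [MeasurableSpace V] [BorelSpace V] [NormedAddCommGroup F] [InnerProductSpace ℝ F]
  {φ : ℝ → ℝ} {M : ℝ}

lemma IsRadialCutoff.shellInner_rescale_le_mul_integral_normSq (h : IsRadialCutoff φ)
    (hM : ∀ z : V, shellWeight φ z ≤ M) {U : V → F} (hU : Continuous U) {y : V} {s : ℝ}
    (hs : 0 < s) (hy : ‖y‖ + s ≤ 3 / 4) :
    shellInner φ (rescale U y s) (rescale U y s)
      ≤ M * (s ^ Module.finrank ℝ V)⁻¹ * ∫ z, ‖U z‖ ^ 2 * φ ‖z‖ := by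
  have hshell := h.isBallWeight_shellWeight (V := V)
  have hresc : Continuous (rescale U y s) :=
    hU.comp (continuous_const.add (continuous_const_smul s))
  have hint : Integrable fun z ↦ ‖U (y + s • z)‖ ^ 2 * φ ‖y + s • z‖ :=
    ((h.isBallWeight.integrable_mul (hU.norm.pow 2)).comp_add_left y).comp_smul hs.ne'
  have hpoint (z : V) : ⟪rescale U y s z, rescale U y s z⟫ * shellWeight φ z
      ≤ M * (‖U (y + s • z)‖ ^ 2 * φ ‖y + s • z‖) := by
    have hM0 : 0 ≤ M := (h.shellWeight_nonneg z).trans (hM z)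
    rcases le_total 1 ‖z‖ with hz | hz
    · rw [hshell.eq_zero z hz, mul_zero]
      exact mul_nonneg hM0 (mul_nonneg (sq_nonneg _) (h.nonneg _))
    · have hnorm : ‖y + s • z‖ ≤ 3 / 4 := by
        refine (norm_add_le _ _).trans (le_trans ?_ hy)
        rw [norm_smul, Real.norm_of_nonneg hs.le]
        gcongr
        exact mul_le_of_le_one_right hs.le hz
      rw [h.eq_one _ hnorm, mul_one, real_inner_self_eq_norm_sq, mul_comm M]
      exact mul_le_mul_of_nonneg_left (hM z) (sq_nonneg _)
  calc shellInner φ (rescale U y s) (rescale U y s)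
      ≤ ∫ z, M * (‖U (y + s • z)‖ ^ 2 * φ ‖y + s • z‖) :=
        integral_mono (hshell.integrable_mul (hresc.inner hresc)) (hint.const_mul M) hpoint
    _ = M * (s ^ Module.finrank ℝ V)⁻¹ * ∫ z, ‖U z‖ ^ 2 * φ ‖z‖ := by
        rw [integral_const_mul, integral_comp_add_smul (fun z ↦ ‖U z‖ ^ 2 * φ ‖z‖) y hs.le,
          smul_eq_mul, mul_assoc]

lemma IsRadialCutoff.integral_normSq_mul_le [Nontrivial V] (h : IsRadialCutoff φ) {U : V → F}
    (hU : ContDiff ℝ 2 U) (hharm : HarmonicOnNhd U (ball 0 1)) :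
    ∫ z, ‖U z‖ ^ 2 * φ ‖z‖ ≤ shellInner φ U U := by
  refine le_trans ?_ (h.finrank_mul_integral_normSq_le hU hharm)
  refine le_mul_of_one_le_left (integral_nonneg fun z ↦ mul_nonneg (sq_nonneg _) (h.nonneg _)) ?_
  exact_mod_cast Module.finrank_pos (R := ℝ) (M := V)

lemma IsRadialCutoff.shellInner_rescale_le [Nontrivial V] (h : IsRadialCutoff φ)
    (hM : ∀ z : V, shellWeight φ z ≤ M) {u : V → F} (hu : ContDiff ℝ 2 u) {x x' : V} {t ρ : ℝ}
    (hharm : HarmonicOnNhd u (ball x t)) (hρ : 0 < ρ) (hx : dist x' x + ρ ≤ 3 / 4 * t)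
    (ht : t ≤ 4 * ρ) :
    shellInner φ (rescale u x' ρ) (rescale u x' ρ)
      ≤ 4 ^ Module.finrank ℝ V * M * shellInner φ (rescale u x t) (rescale u x t) := by
  have ht0 : 0 < t := by linarith [dist_nonneg (x := x') (y := x)]
  have hM0 : 0 ≤ M := (h.shellWeight_nonneg 0).trans (hM 0)
  have hU := contDiff_rescale hu x t
  have hbound := h.shellInner_rescale_le_mul_integral_normSq hM hU.continuous (div_pos hρ ht0)
    (y := t⁻¹ • (x' - x)) <| by
      rw [norm_smul, norm_inv, Real.norm_of_nonneg ht0.le, ← dist_eq_norm, inv_mul_eq_div,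
        ← add_div, div_le_iff₀ ht0]
      exact hx
  rw [rescale_rescale x x' ρ ht0.ne'] at hbound
  refine hbound.trans ?_
  have hscale : ((ρ / t) ^ Module.finrank ℝ V)⁻¹ ≤ 4 ^ Module.finrank ℝ V := by
    rw [← inv_pow, inv_div]
    exact pow_le_pow_left₀ (by positivity) ((div_le_iff₀ hρ).2 ht) _
  rw [mul_comm _ M]
  exact mul_le_mul (mul_le_mul_of_nonneg_left hscale hM0)
    (h.integral_normSq_mul_le hU (harmonicOnNhd_rescale ht0 hharm))
    (integral_nonneg fun z ↦ mul_nonneg (sq_nonneg _) (h.nonneg _)) (by positivity)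

end HeightComparison

section FirstVariation

section Slices

variable {X F : Type*} [NormedAddCommGroup X] [NormedSpace ℝ X] [NormedAddCommGroup F]
  [NormedSpace ℝ F]

lemma fderiv_fderiv_apply_comm {k : X → F} (hk : ContDiff ℝ 2 k) (q a b : X) :
    fderiv ℝ (fun p ↦ fderiv ℝ k p a) q b = fderiv ℝ (fun p ↦ fderiv ℝ k p b) q a := by
  have hdiff : DifferentiableAt ℝ (fderiv ℝ k) q :=
    (hk.fderiv_right (m := 1) (by norm_num)).differentiable one_ne_zero q
  rw [fderiv_clm_apply hdiff (differentiableAt_const _),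
    fderiv_clm_apply hdiff (differentiableAt_const _)]
  simpa using (hk.contDiffAt.isSymmSndFDerivAt (by simp)).eq b a

lemma hasDerivAt_comp_prodMk_left {k : ℝ × X → F} {s : ℝ} {z : X}
    (hk : DifferentiableAt ℝ k (s, z)) :
    HasDerivAt (fun t ↦ k (t, z)) (fderiv ℝ k (s, z) (1, 0)) s :=
  hk.hasFDerivAt.comp_hasDerivAt s ((hasDerivAt_id s).prodMk (hasDerivAt_const s z))

lemma fderiv_comp_prodMk_right {k : ℝ × X → F} {s : ℝ} {z : X} (hk : DifferentiableAt ℝ k (s, z))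
    (v : X) : fderiv ℝ (fun y ↦ k (s, y)) z v = fderiv ℝ k (s, z) (0, v) := by
  have h := hk.hasFDerivAt.comp z ((hasFDerivAt_const s z).prodMk (hasFDerivAt_id z))
  exact congrArg (· v) h.fderiv

end Slices

variable {V : Type*} [NormedAddCommGroup V] [InnerProductSpace ℝ V] [FiniteDimensional ℝ V]
  [MeasurableSpace V] [BorelSpace V]

lemma IsBallWeight.hasDerivAt_integral_mul {ψ : V → ℝ} (hψ : IsBallWeight ψ) {k : ℝ × V → ℝ}
    (hk : ContDiff ℝ 1 k) (s : ℝ) :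
    HasDerivAt (fun t ↦ ∫ z, k (t, z) * ψ z) (∫ z, fderiv ℝ k (s, z) (1, 0) * ψ z) s := by
  have hk' : Continuous fun p ↦ fderiv ℝ k p (1, 0) :=
    (hk.continuous_fderiv one_ne_zero).clm_apply continuous_const
  obtain ⟨B, hB⟩ := ((isCompact_closedBall s 1).prod
    (isCompact_closedBall (0 : V) 1)).exists_bound_of_continuousOn hk'.continuousOn
  refine (hasDerivAt_integral_of_dominated_loc_of_deriv_le (F := fun t z ↦ k (t, z) * ψ z)
    (F' := fun t z ↦ fderiv ℝ k (t, z) (1, 0) * ψ z) (bound := fun z ↦ B * |ψ z|)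
    (closedBall_mem_nhds s one_pos) (.of_forall fun t ↦ ?_)
    (hψ.integrable_mul (hk.continuous.comp (.prodMk_right s)))
    ((hk'.comp (.prodMk_right s)).mul hψ.continuous).aestronglyMeasurable
    (.of_forall fun z t ht ↦ ?_) ?_ (.of_forall fun z t _ ↦ ?_)).2
  · exact ((hk.continuous.comp (.prodMk_right t)).mul hψ.continuous).aestronglyMeasurable
  · rcases le_total 1 ‖z‖ with hz | hz
    · simp only [hψ.eq_zero z hz, mul_zero, norm_zero, abs_zero, le_refl]
    · rw [norm_mul, Real.norm_eq_abs (ψ z)]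
      exact mul_le_mul_of_nonneg_right (hB (t, z) ⟨ht, mem_closedBall_zero_iff.2 hz⟩)
        (abs_nonneg _)
  · simpa only [one_mul] using
      (hψ.integrable_mul (continuous_const (y := (1 : ℝ)))).abs.const_mul B
  · exact (hasDerivAt_comp_prodMk_left (hk.differentiable one_ne_zero _)).mul_const _

variable {F : Type*} [NormedAddCommGroup F] [InnerProductSpace ℝ F] {φ : ℝ → ℝ}

/-- The scale-invariant Dirichlet energy in the unit ball, smoothed by the cutoff `φ`. -/
def cutoffEnergy (φ : ℝ → ℝ) (U : V → F) : ℝ :=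
  ∫ z, gradInner U U z * φ ‖z‖

/-- The frequency of `U` in the unit ball; the frequency of `u` at scale `t` around `x` is
`frequency φ (rescale u x t)`. -/
def frequency (φ : ℝ → ℝ) (U : V → F) : ℝ :=
  cutoffEnergy φ U / shellInner φ U U

/-- The failure of `u` to be homogeneous of degree `c` about `x` (Euler's identity). -/
def homogeneityDefect {V F : Type*} [NormedAddCommGroup V] [NormedSpace ℝ V] [NormedAddCommGroup F]
    [NormedSpace ℝ F] (x : V) (c : ℝ) (u : V → F) (y : V) : F :=
  fderiv ℝ u y (y - x) - c • u y

lemma shellInner_smul_left (c : ℝ) (A B : V → F) :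
    shellInner φ (c • A) B = c * shellInner φ A B := by
  simp only [shellInner, Pi.smul_apply, real_inner_smul_left, mul_assoc, integral_const_mul]

lemma shellInner_comm (A B : V → F) : shellInner φ A B = shellInner φ B A := by
  simp only [shellInner, real_inner_comm]

namespace IsRadialCutoff

lemma integrable_shellInner (h : IsRadialCutoff φ) {A B : V → F} (hA : Continuous A)
    (hB : Continuous B) : Integrable fun z ↦ ⟪A z, B z⟫ * shellWeight φ z :=
  h.isBallWeight_shellWeight.integrable_mul (hA.inner hB)

lemma shellInner_add_left (h : IsRadialCutoff φ) {A B C : V → F} (hA : Continuous A)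
    (hB : Continuous B) (hC : Continuous C) :
    shellInner φ (A + B) C = shellInner φ A C + shellInner φ B C := by
  simp only [shellInner, Pi.add_apply, inner_add_left, add_mul]
  exact integral_add (h.integrable_shellInner hA hC) (h.integrable_shellInner hB hC)

lemma shellInner_self_nonneg (h : IsRadialCutoff φ) (A : V → F) : 0 ≤ shellInner φ A A :=
  integral_nonneg fun z ↦ mul_nonneg real_inner_self_nonneg (h.shellWeight_nonneg z)

lemma cutoffEnergy_nonneg (h : IsRadialCutoff φ) (U : V → F) : 0 ≤ cutoffEnergy φ U :=
  integral_nonneg fun z ↦ mul_nonneg (gradInner_self_nonneg U z) (h.nonneg _)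

lemma hasDerivAt_shellInner_self (h : IsRadialCutoff φ) {k : ℝ × V → F} (hk : ContDiff ℝ 1 k)
    (s : ℝ) :
    HasDerivAt (fun t ↦ shellInner φ (fun z ↦ k (t, z)) fun z ↦ k (t, z))
      (2 * shellInner φ (fun z ↦ k (s, z)) fun z ↦ fderiv ℝ k (s, z) (1, 0)) s := by
  refine (h.isBallWeight_shellWeight.hasDerivAt_integral_mul (hk.inner ℝ hk) s).congr_deriv ?_
  rw [shellInner, ← integral_const_mul]
  refine integral_congr_ae (.of_forall fun z ↦ ?_)
  have hdiff := hk.differentiable one_ne_zero (s, z)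
  simp only [fderiv_inner_apply ℝ hdiff hdiff, real_inner_comm (k (s, z))]
  ring

lemma hasDerivAt_cutoffEnergy (h : IsRadialCutoff φ) {k : ℝ × V → F} (hk : ContDiff ℝ 2 k) {s : ℝ}
    (hharm : HarmonicOnNhd (fun z ↦ k (s, z)) (ball 0 1)) :
    HasDerivAt (fun t ↦ cutoffEnergy φ fun z ↦ k (t, z))
      (2 * shellInner φ (fun z ↦ fderiv ℝ (fun y ↦ k (s, y)) z z)
        fun z ↦ fderiv ℝ k (s, z) (1, 0)) s := by
  let e := stdOrthonormalBasis ℝ V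
  have hdir (v : ℝ × V) : ContDiff ℝ 1 fun p ↦ fderiv ℝ k p v :=
    (hk.fderiv_right (by norm_num)).clm_apply contDiff_const
  have hslice : ContDiff ℝ 2 fun z ↦ k (s, z) := hk.comp (contDiff_prodMk_right s)
  have henergy (t : ℝ) (z : V) : gradInner (fun y ↦ k (t, y)) (fun y ↦ k (t, y)) z
      = ∑ i, ⟪fderiv ℝ k (t, z) (0, e i), fderiv ℝ k (t, z) (0, e i)⟫ := by
    simp only [gradInner, fderiv_comp_prodMk_right (hk.differentiable two_ne_zero _), e]
  have hint := h.isBallWeight.hasDerivAt_integral_mul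
    (ContDiff.sum fun i (_ : i ∈ Finset.univ) ↦ (hdir (0, e i)).inner ℝ (hdir (0, e i))) s
  refine (hint.congr_of_eventuallyEq (.of_forall fun t ↦ ?_)).congr_deriv ?_
  · simp only [cutoffEnergy, henergy]
  rw [shellInner, ← h.isRadialPotential.integral_gradInner_mul hslice hharm
    (W := fun z ↦ fderiv ℝ k (s, z) (1, 0)) ((hdir (1, 0)).comp (contDiff_prodMk_right s)),
    ← integral_const_mul]
  refine integral_congr_ae (.of_forall fun z ↦ ?_)
  have hdiff (v : ℝ × V) := (hdir v).differentiable one_ne_zero (s, z)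
  have hmixed (v : V) : fderiv ℝ (fun y ↦ fderiv ℝ k (s, y) (1, 0)) z v
      = fderiv ℝ (fun p ↦ fderiv ℝ k p (0, v)) (s, z) (1, 0) := by
    rw [fderiv_comp_prodMk_right (k := fun p ↦ fderiv ℝ k p (1, 0)) (hdiff _),
      fderiv_fderiv_apply_comm hk]
  have hsum := fderiv_fun_sum (u := Finset.univ) (𝕜 := ℝ) fun i _ ↦
    (hdiff (0, e i)).inner ℝ (hdiff (0, e i))
  simp only [gradInner, hmixed, fderiv_comp_prodMk_right (hk.differentiable two_ne_zero _), hsum,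
    sum_apply, fderiv_inner_apply ℝ (hdiff _) (hdiff _), Finset.mul_sum, Finset.sum_mul, e,
    real_inner_comm (fderiv ℝ k (s, z) _)]
  exact Finset.sum_congr rfl fun i _ ↦ by ring

lemma cutoffEnergy_eq (h : IsRadialCutoff φ) {U : V → F} (hU : ContDiff ℝ 2 U)
    (hharm : HarmonicOnNhd U (ball 0 1)) :
    cutoffEnergy φ U = shellInner φ (fun z ↦ fderiv ℝ U z z) U :=
  h.isRadialPotential.integral_gradInner_mul hU hharm (hU.of_le one_le_two)

lemma shellInner_homogeneityDefect (h : IsRadialCutoff φ) {U W : V → F} (hU : ContDiff ℝ 1 U)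
    (hW : Continuous W) (c : ℝ) :
    shellInner φ (homogeneityDefect 0 c U) W
      = shellInner φ (fun z ↦ fderiv ℝ U z z) W - c * shellInner φ U W := by
  have hradial : Continuous fun z ↦ fderiv ℝ U z z :=
    (hU.continuous_fderiv one_ne_zero).clm_apply continuous_id
  have hdecomp : homogeneityDefect 0 c U = (fun z ↦ fderiv ℝ U z z) + (-c) • U := by
    ext z
    simp [homogeneityDefect, sub_eq_add_neg]
  rw [hdecomp, h.shellInner_add_left hradial (hU.continuous.const_smul _) hW, shellInner_smul_left]
  ring

lemma shellInner_homogeneityDefect_self (h : IsRadialCutoff φ) {U : V → F} (hU : ContDiff ℝ 2 U)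
    (hharm : HarmonicOnNhd U (ball 0 1)) (hH : shellInner φ U U ≠ 0) :
    shellInner φ (homogeneityDefect 0 (frequency φ U) U) U = 0 := by
  rw [h.shellInner_homogeneityDefect (hU.of_le one_le_two) hU.continuous,
    ← h.cutoffEnergy_eq hU hharm, frequency, div_mul_cancel₀ _ hH, sub_self]

lemma hasDerivAt_frequency (h : IsRadialCutoff φ) {k : ℝ × V → F} (hk : ContDiff ℝ 2 k) {s : ℝ}
    {U : V → F} (hkU : ∀ z, k (s, z) = U z) (hharm : HarmonicOnNhd U (ball 0 1))
    (hH : shellInner φ U U ≠ 0) :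
    HasDerivAt (fun t ↦ frequency φ fun z ↦ k (t, z))
      (2 / shellInner φ U U * shellInner φ (homogeneityDefect 0 (frequency φ U) U)
        fun z ↦ fderiv ℝ k (s, z) (1, 0)) s := by
  obtain rfl : (fun z ↦ k (s, z)) = U := funext hkU
  have hslice : ContDiff ℝ 2 fun z ↦ k (s, z) := hk.comp (contDiff_prodMk_right s)
  have hvariation : Continuous fun z ↦ fderiv ℝ k (s, z) (1, 0) :=
    ((hk.continuous_fderiv two_ne_zero).comp (.prodMk_right s)).clm_apply continuous_const
  refine ((h.hasDerivAt_cutoffEnergy hk hharm).div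
    (h.hasDerivAt_shellInner_self (hk.of_le one_le_two) s) hH).congr_deriv ?_
  rw [h.shellInner_homogeneityDefect (hslice.of_le one_le_two) hvariation, frequency]
  field_simp

end IsRadialCutoff

end FirstVariation

section RadialVariation

variable {V F : Type*} [NormedAddCommGroup V] [InnerProductSpace ℝ V] [NormedAddCommGroup F]
  [InnerProductSpace ℝ F] {u : V → F}

lemma rescale_homogeneityDefect (u : V → F) (x : V) (c t : ℝ) :
    rescale (homogeneityDefect x c u) x t = homogeneityDefect 0 c (rescale u x t) := by
  ext z
  simp only [rescale, homogeneityDefect, fderiv_rescale, add_sub_cancel_left, sub_zero, map_smul,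
    Pi.smul_apply, smul_apply]

lemma contDiff_homogeneityDefect {n m : WithTop ℕ∞} (hu : ContDiff ℝ m u) (hnm : n + 1 ≤ m) (x : V)
    (c : ℝ) : ContDiff ℝ n (homogeneityDefect x c u) :=
  ((hu.fderiv_right hnm).clm_apply (contDiff_id.sub contDiff_const)).sub
    ((hu.of_le (le_self_add.trans hnm)).const_smul c)

lemma contDiff_rescale_dilation {n : WithTop ℕ∞} (hu : ContDiff ℝ n u) (x : V) :
    ContDiff ℝ n fun p : ℝ × V ↦ rescale u x p.1 p.2 :=
  hu.comp (contDiff_const.add (contDiff_fst.smul contDiff_snd))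

lemma fderiv_rescale_dilation (hu : Differentiable ℝ u) (x : V) {t : ℝ} (ht : t ≠ 0) :
    (fun z ↦ fderiv ℝ (fun p : ℝ × V ↦ rescale u x p.1 p.2) (t, z) (1, 0))
      = t⁻¹ • fun z ↦ fderiv ℝ (rescale u x t) z z := by
  ext z
  have hpath : HasDerivAt (fun s : ℝ ↦ x + s • z) z t := by
    simpa using ((hasDerivAt_id t).smul_const z).const_add x
  have hdiff : Differentiable ℝ fun p : ℝ × V ↦ rescale u x p.1 p.2 := by
    unfold rescale; fun_prop
  refine (hasDerivAt_comp_prodMk_left (hdiff _)).unique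
    (((hu _).hasFDerivAt.comp_hasDerivAt t hpath).congr_deriv ?_)
  rw [fderiv_rescale, Pi.smul_apply, Pi.smul_apply, smul_apply, inv_smul_smul₀ ht]
  rfl

variable [FiniteDimensional ℝ V] [MeasurableSpace V] [BorelSpace V] {φ : ℝ → ℝ} {x : V}

namespace IsRadialCutoff

lemma hasDerivAt_shellInner_rescale (h : IsRadialCutoff φ) (hu : ContDiff ℝ 2 u) {t : ℝ}
    (ht : 0 < t) (hharm : HarmonicOnNhd u (ball x t)) :
    HasDerivAt (fun s ↦ shellInner φ (rescale u x s) (rescale u x s))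
      (2 / t * cutoffEnergy φ (rescale u x t)) t := by
  refine (h.hasDerivAt_shellInner_self
    (contDiff_rescale_dilation (hu.of_le one_le_two) x) t).congr_deriv ?_
  rw [fderiv_rescale_dilation (hu.differentiable two_ne_zero) x ht.ne', shellInner_comm,
    shellInner_smul_left, h.cutoffEnergy_eq (contDiff_rescale hu x t)
    (harmonicOnNhd_rescale ht hharm)]
  ring

lemma hasDerivAt_frequency_rescale (h : IsRadialCutoff φ) (hu : ContDiff ℝ 2 u) {t : ℝ}
    (ht : 0 < t) (hharm : HarmonicOnNhd u (ball x t))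
    (hH : shellInner φ (rescale u x t) (rescale u x t) ≠ 0) :
    HasDerivAt (fun s ↦ frequency φ (rescale u x s))
      (2 / (t * shellInner φ (rescale u x t) (rescale u x t)) *
        shellInner φ (rescale (homogeneityDefect x (frequency φ (rescale u x t)) u) x t)
          (rescale (homogeneityDefect x (frequency φ (rescale u x t)) u) x t)) t := by
  have hU := contDiff_rescale hu x t
  have hharm' := harmonicOnNhd_rescale ht hharm
  set U := rescale u x t
  set D := homogeneityDefect 0 (frequency φ U) U with hD
  have hDcont : Continuous D :=
    (contDiff_homogeneityDefect hU (n := 1) one_add_one_eq_two.le 0 _).continuous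
  have hradial : shellInner φ D D = shellInner φ (fun z ↦ fderiv ℝ U z z) D := by
    rw [hD, h.shellInner_homogeneityDefect (hU.of_le one_le_two) hDcont, shellInner_comm U,
      h.shellInner_homogeneityDefect_self hU hharm' hH, mul_zero, sub_zero]
  refine (h.hasDerivAt_frequency (U := U) (contDiff_rescale_dilation hu x) (fun _ ↦ rfl) hharm'
    hH).congr_deriv ?_
  rw [rescale_homogeneityDefect, fderiv_rescale_dilation (hu.differentiable two_ne_zero) x ht.ne',
    hradial, shellInner_comm D, shellInner_smul_left, ← mul_assoc]
  congr 1
  field_simp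

lemma monotoneOn_shellInner_rescale (h : IsRadialCutoff φ) (hu : ContDiff ℝ 2 u) {T : ℝ}
    (hharm : HarmonicOnNhd u (ball x T)) :
    MonotoneOn (fun t ↦ shellInner φ (rescale u x t) (rescale u x t)) (Set.Ioc 0 T) := by
  have hderiv (t : ℝ) (ht : t ∈ Set.Ioc 0 T) :=
    h.hasDerivAt_shellInner_rescale hu ht.1 (hharm.mono (ball_subset_ball ht.2))
  refine monotoneOn_of_hasDerivWithinAt_nonneg (convex_Ioc 0 T)
    (fun t ht ↦ (hderiv t ht).continuousAt.continuousWithinAt)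
    (fun t ht ↦ (hderiv t (interior_subset ht)).hasDerivWithinAt) fun t ht ↦ ?_
  exact mul_nonneg (div_nonneg two_pos.le (interior_subset ht).1.le) (h.cutoffEnergy_nonneg _)

lemma shellInner_rescale_pos (h : IsRadialCutoff φ) (hu : ContDiff ℝ 2 u) {a b : ℝ} (ha : 0 < a)
    (hab : a ≤ b) (hharm : HarmonicOnNhd u (ball x b))
    (hH : 0 < shellInner φ (rescale u x a) (rescale u x a)) :
    0 < shellInner φ (rescale u x b) (rescale u x b) :=
  hH.trans_le <| h.monotoneOn_shellInner_rescale hu hharm ⟨ha, hab⟩ ⟨ha.trans_le hab, le_rfl⟩ hab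

lemma monotoneOn_frequency_rescale (h : IsRadialCutoff φ) (hu : ContDiff ℝ 2 u) {a b : ℝ}
    (ha : 0 < a) (hharm : HarmonicOnNhd u (ball x b))
    (hH : 0 < shellInner φ (rescale u x a) (rescale u x a)) :
    MonotoneOn (fun t ↦ frequency φ (rescale u x t)) (Set.Icc a b) := by
  have hderiv (t : ℝ) (ht : t ∈ Set.Icc a b) :=
    have hharm' := hharm.mono (ball_subset_ball ht.2)
    h.hasDerivAt_frequency_rescale hu (ha.trans_le ht.1) hharm'
      (h.shellInner_rescale_pos hu ha ht.1 hharm' hH).ne'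
  refine monotoneOn_of_hasDerivWithinAt_nonneg (convex_Icc a b)
    (fun t ht ↦ (hderiv t ht).continuousAt.continuousWithinAt)
    (fun t ht ↦ (hderiv t (interior_subset ht)).hasDerivWithinAt) fun t ht ↦ ?_
  have ht0 : 0 < t := ha.trans_le (interior_subset ht).1
  have := h.shellInner_self_nonneg (rescale u x t)
  exact mul_nonneg (by positivity) (h.shellInner_self_nonneg _)

lemma shellInner_rescale_le_rpow_mul (h : IsRadialCutoff φ) (hu : ContDiff ℝ 2 u) {a b Λ : ℝ}
    (ha : 0 < a) (hab : a ≤ b) (hharm : HarmonicOnNhd u (ball x b))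
    (hH : 0 < shellInner φ (rescale u x a) (rescale u x a))
    (hΛ : frequency φ (rescale u x b) ≤ Λ) :
    shellInner φ (rescale u x b) (rescale u x b)
      ≤ (b / a) ^ (2 * Λ) * shellInner φ (rescale u x a) (rescale u x a) := by
  have hderiv (t : ℝ) (ht : t ∈ Set.Icc a b) :=
    (h.hasDerivAt_shellInner_rescale hu (ha.trans_le ht.1)
      (hharm.mono (ball_subset_ball ht.2))).mul
      (Real.hasDerivAt_rpow_const (p := -(2 * Λ)) (.inl (ha.trans_le ht.1).ne'))
  have henergy (t : ℝ) (ht : t ∈ Set.Icc a b) :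
      cutoffEnergy φ (rescale u x t) ≤ Λ * shellInner φ (rescale u x t) (rescale u x t) := by
    have hpos := h.shellInner_rescale_pos hu ha ht.1 (hharm.mono (ball_subset_ball ht.2)) hH
    exact (div_le_iff₀ hpos).1 <|
      (h.monotoneOn_frequency_rescale hu ha hharm hH ht ⟨hab, le_rfl⟩ ht.2).trans hΛ
  -- The frequency bound says that `H(t) * t ^ (-2Λ)` is nonincreasing, as `t H' = 2 D`.
  have hanti := antitoneOn_of_hasDerivWithinAt_nonpos (convex_Icc a b)
    (fun t ht ↦ (hderiv t ht).continuousAt.continuousWithinAt)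
    (fun t ht ↦ (hderiv t (interior_subset ht)).hasDerivWithinAt) fun t ht ↦ by
      have ht0 : 0 < t := ha.trans_le (interior_subset ht).1
      rw [Real.rpow_sub_one ht0.ne']
      calc _ = 2 / t * t ^ (-(2 * Λ)) * (cutoffEnergy φ (rescale u x t)
              - Λ * shellInner φ (rescale u x t) (rescale u x t)) := by field_simp; ring
        _ ≤ 0 := mul_nonpos_of_nonneg_of_nonpos (by positivity)
              (sub_nonpos.2 (henergy t (interior_subset ht)))
  have hb := ha.trans_le hab
  have hba := hanti ⟨le_rfl, hab⟩ ⟨hab, le_rfl⟩ hab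
  simp only [Pi.mul_apply, Real.rpow_neg ha.le, Real.rpow_neg hb.le, ← div_eq_mul_inv] at hba
  rw [div_le_iff₀ (by positivity)] at hba
  rw [Real.div_rpow hb.le ha.le]
  exact hba.trans_eq (by ring)

lemma exists_shellInner_homogeneityDefect_le (h : IsRadialCutoff φ) (hu : ContDiff ℝ 2 u) {a b : ℝ}
    (ha : 0 < a) (hab : 2 * a ≤ b) (hharm : HarmonicOnNhd u (ball x b))
    (hH : 0 < shellInner φ (rescale u x a) (rescale u x a)) :
    ∃ t ∈ Set.Ioo (b / 2) b, ∃ c : ℝ,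
      shellInner φ (rescale (homogeneityDefect x c u) x t) (rescale (homogeneityDefect x c u) x t)
        ≤ (frequency φ (rescale u x b) - frequency φ (rescale u x a))
          * shellInner φ (rescale u x b) (rescale u x b) := by
  have hb : 0 < b := by linarith
  have hmono := h.monotoneOn_frequency_rescale hu ha hharm hH
  have hpos (t : ℝ) (ht : t ∈ Set.Icc a b) :=
    h.shellInner_rescale_pos hu ha ht.1 (hharm.mono (ball_subset_ball ht.2)) hH
  have hderiv (t : ℝ) (ht : t ∈ Set.Icc (b / 2) b) :=
    have hat : a ≤ t := by linarith [ht.1]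
    h.hasDerivAt_frequency_rescale hu (ha.trans_le hat) (hharm.mono (ball_subset_ball ht.2))
      (hpos t ⟨hat, ht.2⟩).ne'
  obtain ⟨t, ht, hslope⟩ := exists_hasDerivAt_eq_slope _ _ (half_lt_self hb)
    (fun t ht ↦ (hderiv t ht).continuousAt.continuousWithinAt)
    fun t ht ↦ hderiv t (Set.Ioo_subset_Icc_self ht)
  refine ⟨t, ht, frequency φ (rescale u x t), ?_⟩
  have ht0 : 0 < t := (half_pos hb).trans ht.1
  have hat : a ≤ t := by linarith [ht.1]
  have hHt := hpos t ⟨hat, ht.2.le⟩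
  have hhalf := hmono ⟨le_rfl, by linarith⟩ ⟨by linarith, half_le_self hb.le⟩ (by linarith)
  have htop := hmono ⟨by linarith, half_le_self hb.le⟩ ⟨by linarith, le_rfl⟩ (half_le_self hb.le)
  have hHmono := h.monotoneOn_shellInner_rescale hu hharm ⟨ht0, ht.2.le⟩ ⟨hb, le_rfl⟩ ht.2.le
  dsimp only at hhalf htop hHmono
  set D := shellInner φ (rescale (homogeneityDefect x (frequency φ (rescale u x t)) u) x t) _
  have hD : D = t / b * ((frequency φ (rescale u x b) - frequency φ (rescale u x (b / 2)))
      * shellInner φ (rescale u x t) (rescale u x t)) := by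
    field_simp at hslope ⊢
    linear_combination hslope
  rw [hD]
  refine (mul_le_of_le_one_left (mul_nonneg (sub_nonneg.2 htop) hHt.le)
    ((div_le_one hb).2 ht.2.le)).trans ?_
  exact mul_le_mul (sub_le_sub_left hhalf _) hHmono hHt.le (by linarith)

end IsRadialCutoff

end RadialVariation

section HarmonicDefect

variable {V F : Type*} [NormedAddCommGroup V] [NormedAddCommGroup F] [NormedSpace ℝ F] {u : V → F}

lemma fderiv_fderiv_apply_sub [NormedSpace ℝ V] (hu : ContDiff ℝ 2 u) (x y w : V) :
    fderiv ℝ (fun z ↦ fderiv ℝ u z (z - x)) y w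
      = fderiv ℝ (fun z ↦ fderiv ℝ u z w) y (y - x) + fderiv ℝ u y w := by
  have hdiff : DifferentiableAt ℝ (fderiv ℝ u) y :=
    (hu.fderiv_right (m := 1) (by norm_num)).differentiable one_ne_zero y
  rw [fderiv_fderiv_apply_comm hu, fderiv_clm_apply hdiff (differentiableAt_const _),
    fderiv_clm_apply hdiff (differentiableAt_fun_id.sub_const x)]
  simp only [fderiv_sub_const, fderiv_fun_id, ContinuousLinearMap.comp_id, map_sub, add_apply,
    sub_apply, ContinuousLinearMap.flip_apply, fderiv_fun_const, Pi.zero_apply,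
    ContinuousLinearMap.comp_zero, zero_add]
  abel

variable [InnerProductSpace ℝ V] [FiniteDimensional ℝ V]

lemma laplacian_fderiv_apply_sub (hu : ContDiff ℝ 3 u) (x y : V) :
    Laplacian.laplacian (fun z ↦ fderiv ℝ u z (z - x)) y
      = fderiv ℝ (Laplacian.laplacian u) y (y - x) + (2 : ℝ) • Laplacian.laplacian u y := by
  let b := stdOrthonormalBasis ℝ V
  have hu' (i) : ContDiff ℝ 2 fun z ↦ fderiv ℝ u z (b i) :=
    (hu.fderiv_right (by norm_num)).clm_apply contDiff_const
  have hu'' (i) : ContDiff ℝ 1 fun z ↦ fderiv ℝ (fun z ↦ fderiv ℝ u z (b i)) z (b i) :=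
    ((hu' i).fderiv_right (by norm_num)).clm_apply contDiff_const
  have hu2 : ContDiff ℝ 2 u := hu.of_le (by norm_num)
  have hΔ : Laplacian.laplacian u
      = fun z ↦ ∑ i, fderiv ℝ (fun z ↦ fderiv ℝ u z (b i)) z (b i) :=
    funext fun z ↦ laplacian_eq_sum_fderiv_fderiv b hu2.contDiffAt
  have hterm (i) : fderiv ℝ (fun z ↦ fderiv ℝ (fun z ↦ fderiv ℝ u z (z - x)) z (b i)) y (b i)
      = fderiv ℝ (fun z ↦ fderiv ℝ (fun z ↦ fderiv ℝ u z (b i)) z (b i)) y (y - x)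
        + (2 : ℝ) • fderiv ℝ (fun z ↦ fderiv ℝ u z (b i)) y (b i) := by
    have hradial : DifferentiableAt ℝ
        (fun z ↦ fderiv ℝ (fun z ↦ fderiv ℝ u z (b i)) z (z - x)) y :=
      (((hu' i).fderiv_right (m := 1) (by norm_num)).clm_apply
        (contDiff_id.sub contDiff_const)).differentiable one_ne_zero y
    simp only [fderiv_fderiv_apply_sub hu2 x _ (b i)]
    rw [fderiv_fun_add hradial ((hu' i).differentiable two_ne_zero y), add_apply,
      fderiv_fderiv_apply_sub (hu' i), two_smul, add_assoc]
  have hradial : ContDiff ℝ 2 fun z ↦ fderiv ℝ u z (z - x) :=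
    (hu.fderiv_right (by norm_num)).clm_apply (contDiff_id.sub contDiff_const)
  rw [laplacian_eq_sum_fderiv_fderiv b hradial.contDiffAt, hΔ,
    fderiv_fun_sum fun i _ ↦ (hu'' i).differentiable one_ne_zero y]
  simp only [hterm, sum_apply, Finset.sum_add_distrib, Finset.smul_sum]

lemma harmonicOnNhd_homogeneityDefect (hu : ContDiff ℝ 3 u) {s : Set V}
    (hharm : HarmonicOnNhd u s) (x : V) (c : ℝ) :
    HarmonicOnNhd (homogeneityDefect x c u) s := by
  have hradial : ContDiff ℝ 2 fun z ↦ fderiv ℝ u z (z - x) :=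
    (hu.fderiv_right (by norm_num)).clm_apply (contDiff_id.sub contDiff_const)
  refine HarmonicOnNhd.sub (fun y hy ↦ ⟨hradial.contDiffAt, ?_⟩) hharm.const_smul
  filter_upwards [(hharm y hy).2.eventuallyEq_nhds] with z hz
  rw [laplacian_fderiv_apply_sub hu, hz.fderiv_eq, hz.self_of_nhds]
  simp

end HarmonicDefect

section Pinching

variable {V F : Type*} [NormedAddCommGroup V] [InnerProductSpace ℝ V] [FiniteDimensional ℝ V]
  [Nontrivial V] [MeasurableSpace V] [BorelSpace V] [NormedAddCommGroup F] [InnerProductSpace ℝ F]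
  {u : V → F} {φ : ℝ → ℝ} {M Λ r : ℝ} {x x₀ : V}

lemma IsRadialCutoff.shellInner_rescale_quarter_le (h : IsRadialCutoff φ)
    (hM : ∀ z : V, shellWeight φ z ≤ M) (hu : ContDiff ℝ 2 u) (hr : 0 < r)
    (hx : dist x x₀ ≤ r / 4) (hharm : HarmonicOnNhd u (ball x r)) :
    shellInner φ (rescale u x₀ (r / 4)) (rescale u x₀ (r / 4))
      ≤ 4 ^ Module.finrank ℝ V * M * shellInner φ (rescale u x r) (rescale u x r) :=
  h.shellInner_rescale_le hM hu hharm (by positivity) (by rw [dist_comm]; linarith) (by linarith)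

lemma IsRadialCutoff.exists_shellInner_homogeneityDefect_le_pinching (h : IsRadialCutoff φ)
    (hM : ∀ z : V, shellWeight φ z ≤ M) (hu : ContDiff ℝ 3 u) (hr : 0 < r)
    (hx : dist x x₀ ≤ r / 4) (hharm : HarmonicOnNhd u (ball x₀ (4 * r)))
    (hH : 0 < shellInner φ (rescale u x₀ (r / 4)) (rescale u x₀ (r / 4)))
    (hΛ : frequency φ (rescale u x₀ (4 * r)) ≤ Λ) :
    ∃ c : ℝ,
      shellInner φ (rescale (homogeneityDefect x₀ c u) x r) (rescale (homogeneityDefect x₀ c u) x r)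
        ≤ (4 ^ Module.finrank ℝ V * M) ^ 2 * 16 ^ (2 * Λ)
          * (frequency φ (rescale u x₀ (4 * r)) - frequency φ (rescale u x₀ (r / 4)))
          * shellInner φ (rescale u x r) (rescale u x r) := by
  have hu2 : ContDiff ℝ 2 u := hu.of_le (by norm_num)
  have hM0 : 0 ≤ M := (h.shellWeight_nonneg 0).trans (hM 0)
  have hpinching : 0 ≤ frequency φ (rescale u x₀ (4 * r)) - frequency φ (rescale u x₀ (r / 4)) :=
    sub_nonneg.2 <| h.monotoneOn_frequency_rescale hu2 (a := r / 4) (by positivity) hharm hH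
      ⟨le_rfl, by linarith⟩ ⟨by linarith, le_rfl⟩ (by linarith)
  obtain ⟨t, ht, c, hc⟩ := h.exists_shellInner_homogeneityDefect_le hu2 (a := r / 4)
    (by positivity) (by linarith) hharm hH
  set K := 4 ^ Module.finrank ℝ V * M
  set W := frequency φ (rescale u x₀ (4 * r)) - frequency φ (rescale u x₀ (r / 4))
  have hdefect := harmonicOnNhd_homogeneityDefect hu (hharm.mono (ball_subset_ball ht.2.le)) x₀ c
  have hgrowth := h.shellInner_rescale_le_rpow_mul hu2 (a := r / 4) (by positivity) (by linarith)
    hharm hH hΛ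
  rw [show 4 * r / (r / 4) = 16 by field_simp; norm_num] at hgrowth
  refine ⟨c, ?_⟩
  calc shellInner φ (rescale (homogeneityDefect x₀ c u) x r)
        (rescale (homogeneityDefect x₀ c u) x r)
      ≤ K * shellInner φ (rescale (homogeneityDefect x₀ c u) x₀ t)
        (rescale (homogeneityDefect x₀ c u) x₀ t) :=
        h.shellInner_rescale_le hM (contDiff_homogeneityDefect hu (by norm_num) x₀ c) hdefect hr
          (by linarith [ht.1]) ht.2.le
    _ ≤ K * (W * (16 ^ (2 * Λ) *
        (K * shellInner φ (rescale u x r) (rescale u x r)))) := by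
        gcongr
        refine hc.trans (mul_le_mul_of_nonneg_left (hgrowth.trans ?_) hpinching)
        gcongr
        exact h.shellInner_rescale_quarter_le hM hu2 hr hx
          (hharm.mono (ball_subset_ball' (by linarith)))
    _ = K ^ 2 * 16 ^ (2 * Λ) * W * shellInner φ (rescale u x r) (rescale u x r) := by ring

end Pinching

section SegmentAlgebra

lemma abs_inner_le_sq_of_inner_eq_zero {X : Type*} [SeminormedAddCommGroup X]
    [InnerProductSpace ℝ X] {Q P₁ P₂ U : X} {a b : ℝ} (ha : 0 ≤ a) (hb : 0 ≤ b) (hab : a + b = 1)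
    (c c' : ℝ) (hQ : Q = a • P₁ + b • P₂ + c • U) (horth : ⟪Q, U⟫ = 0) :
    |⟪Q, P₁ - P₂ + c' • U⟫| ≤ (‖P₁‖ + ‖P₂‖) ^ 2 := by
  have hnorm : ‖Q‖ ≤ ‖P₁‖ + ‖P₂‖ := by
    rcases (norm_nonneg Q).eq_or_lt with hzero | hpos
    · rw [← hzero]; positivity
    refine le_of_mul_le_mul_left ?_ hpos
    calc ‖Q‖ * ‖Q‖ = ⟪Q, a • P₁ + b • P₂⟫ := by
          rw [← real_inner_self_eq_norm_mul_norm]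
          nth_rw 2 [hQ]
          rw [inner_add_right, real_inner_smul_right, horth, mul_zero, add_zero]
      _ ≤ ‖Q‖ * ‖a • P₁ + b • P₂‖ := real_inner_le_norm _ _
      _ ≤ ‖Q‖ * (‖P₁‖ + ‖P₂‖) := by
          gcongr
          refine (norm_add_le _ _).trans (add_le_add ?_ ?_) <;>
            rw [norm_smul, Real.norm_of_nonneg ‹_›] <;>
            exact mul_le_of_le_one_left (norm_nonneg _) (by linarith)
  calc |⟪Q, P₁ - P₂ + c' • U⟫| = |⟪Q, P₁ - P₂⟫| := by
        rw [inner_add_right, real_inner_smul_right, horth, mul_zero, add_zero]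
    _ ≤ ‖Q‖ * ‖P₁ - P₂‖ := abs_real_inner_le_norm _ _
    _ ≤ (‖P₁‖ + ‖P₂‖) * (‖P₁‖ + ‖P₂‖) :=
        mul_le_mul hnorm (norm_sub_le _ _) (norm_nonneg _) (by positivity)
    _ = (‖P₁‖ + ‖P₂‖) ^ 2 := (sq _).symm

section Defects

variable {V F : Type*} [NormedAddCommGroup V] [NormedSpace ℝ V] [NormedAddCommGroup F]
  [NormedSpace ℝ F]

lemma homogeneityDefect_convexCombination (u : V → F) {x₁ x₂ : V} {a b : ℝ} (hab : a + b = 1)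
    (c c₁ c₂ : ℝ) :
    homogeneityDefect (a • x₁ + b • x₂) c u
      = a • homogeneityDefect x₁ c₁ u + b • homogeneityDefect x₂ c₂ u
        + (a * c₁ + b * c₂ - c) • u := by
  ext y
  have hy : y - (a • x₁ + b • x₂) = a • (y - x₁) + b • (y - x₂) := by
    rw [smul_sub, smul_sub, sub_add_sub_comm, ← add_smul, hab, one_smul]
  simp only [homogeneityDefect, hy, map_add, map_smul, Pi.add_apply, Pi.smul_apply]
  module

lemma fderiv_apply_sub_eq_homogeneityDefect (u : V → F) (x₁ x₂ : V) (c₁ c₂ : ℝ) :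
    (fun y ↦ fderiv ℝ u y (x₂ - x₁))
      = homogeneityDefect x₁ c₁ u - homogeneityDefect x₂ c₂ u + (c₁ - c₂) • u := by
  ext y
  rw [← sub_sub_sub_cancel_left x₁ x₂ y, map_sub]
  simp only [homogeneityDefect, Pi.add_apply, Pi.sub_apply, Pi.smul_apply]
  module

end Defects

end SegmentAlgebra

section LineDerivative

variable {V F : Type*} [NormedAddCommGroup V] [InnerProductSpace ℝ V] [FiniteDimensional ℝ V]
  [MeasurableSpace V] [BorelSpace V] [NormedAddCommGroup F] [InnerProductSpace ℝ F]
  {u : V → F} {φ : ℝ → ℝ} {M Λ r : ℝ} {x x₁ x₂ : V}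

/-- The form `shellInner φ` on continuous functions, which makes the abstract Cauchy–Schwarz
argument applicable to it. It is only semidefinite: functions vanishing on the shell have norm
zero. -/
abbrev IsRadialCutoff.shellCore (h : IsRadialCutoff φ) : PreInnerProductSpace.Core ℝ C(V, F) where
  inner A B := shellInner φ A B
  conj_inner_symm A B := shellInner_comm (B : V → F) A
  re_inner_nonneg A := h.shellInner_self_nonneg (A : V → F)
  add_left A B C := h.shellInner_add_left A.continuous B.continuous C.continuous
  smul_left A B c := shellInner_smul_left c (A : V → F) B

lemma IsRadialCutoff.abs_shellInner_le_sq (h : IsRadialCutoff φ) {Q P₁ P₂ U : V → F}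
    (hP₁ : Continuous P₁) (hP₂ : Continuous P₂) (hU : Continuous U) {a b : ℝ} (ha : 0 ≤ a)
    (hb : 0 ≤ b) (hab : a + b = 1) (c c' : ℝ) (hQ : Q = a • P₁ + b • P₂ + c • U)
    (horth : shellInner φ Q U = 0) :
    |shellInner φ Q (P₁ - P₂ + c' • U)|
      ≤ (√(shellInner φ P₁ P₁) + √(shellInner φ P₂ P₂)) ^ 2 := by
  subst hQ
  let := InnerProductSpace.Core.toSeminormedAddCommGroup (c := h.shellCore (V := V) (F := F))
  let := InnerProductSpace.ofCore (h.shellCore (V := V) (F := F))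
  exact abs_inner_le_sq_of_inner_eq_zero (X := C(V, F)) (P₁ := ⟨P₁, hP₁⟩) (P₂ := ⟨P₂, hP₂⟩)
    (U := ⟨U, hU⟩) ha hb hab c c' rfl horth

lemma IsRadialCutoff.hasLineDerivAt_frequency_rescale (h : IsRadialCutoff φ) (hu : ContDiff ℝ 2 u)
    (hr : 0 < r) (hharm : HarmonicOnNhd u (ball x r))
    (hH : shellInner φ (rescale u x r) (rescale u x r) ≠ 0) (v : V) :
    HasLineDerivAt ℝ (fun y ↦ frequency φ (rescale u y r))
      (2 / shellInner φ (rescale u x r) (rescale u x r) *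
        shellInner φ (rescale (homogeneityDefect x (frequency φ (rescale u x r)) u) x r)
          (rescale (fun y ↦ fderiv ℝ u y v) x r)) x v := by
  have hk : ContDiff ℝ 2 fun p : ℝ × V ↦ rescale u (x + p.1 • v) r p.2 := by
    unfold rescale; fun_prop
  have hvariation : (fun z ↦ fderiv ℝ (fun p : ℝ × V ↦ rescale u (x + p.1 • v) r p.2) (0, z) (1, 0))
      = rescale (fun y ↦ fderiv ℝ u y v) x r := by
    ext z
    have hpath : HasDerivAt (fun s : ℝ ↦ x + s • v + r • z) v 0 := by
      simpa using (((hasDerivAt_id (0 : ℝ)).smul_const v).const_add x).add_const (r • z)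
    refine (hasDerivAt_comp_prodMk_left (hk.differentiable two_ne_zero _)).unique
      (((hu.differentiable two_ne_zero _).hasFDerivAt.comp_hasDerivAt 0 hpath).congr_deriv ?_)
    simp only [rescale, zero_smul, add_zero]
  rw [rescale_homogeneityDefect, ← hvariation]
  refine h.hasDerivAt_frequency hk (fun z ↦ ?_) (harmonicOnNhd_rescale hr hharm) hH
  simp only [zero_smul, add_zero]

lemma IsRadialCutoff.exists_hasLineDerivAt_frequency_le_defects (h : IsRadialCutoff φ)
    (hu : ContDiff ℝ 2 u) (hr : 0 < r) (hharm : HarmonicOnNhd u (ball x r))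
    (hH : 0 < shellInner φ (rescale u x r) (rescale u x r)) (hx : x ∈ segment ℝ x₁ x₂)
    (c₁ c₂ : ℝ) {P₁ P₂ : V → F} (hP₁ : P₁ = rescale (homogeneityDefect x₁ c₁ u) x r)
    (hP₂ : P₂ = rescale (homogeneityDefect x₂ c₂ u) x r) :
    ∃ d, HasLineDerivAt ℝ (fun y ↦ frequency φ (rescale u y r)) d x (x₂ - x₁) ∧
      |d| ≤ 2 / shellInner φ (rescale u x r) (rescale u x r)
        * (√(shellInner φ P₁ P₁) + √(shellInner φ P₂ P₂)) ^ 2 := by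
  refine ⟨_, h.hasLineDerivAt_frequency_rescale hu hr hharm hH.ne' (x₂ - x₁), ?_⟩
  have hcont (x' : V) (c : ℝ) : Continuous (rescale (homogeneityDefect x' c u) x r) :=
    (contDiff_rescale (contDiff_homogeneityDefect hu (n := 1) one_add_one_eq_two.le x' c)
      x r).continuous
  have hdirection := congrArg (rescale · x r) (fderiv_apply_sub_eq_homogeneityDefect u x₁ x₂ c₁ c₂)
  obtain ⟨a, b, ha, hb, hab, hxab⟩ := hx
  have heuler := congrArg (rescale · x r) <|
    homogeneityDefect_convexCombination u (x₁ := x₁) (x₂ := x₂) hab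
      (frequency φ (rescale u x r)) c₁ c₂
  rw [hxab] at heuler
  subst hP₁ hP₂
  rw [abs_mul, abs_of_pos (div_pos two_pos hH)]
  refine mul_le_mul_of_nonneg_left ?_ (div_pos two_pos hH).le
  refine (congrArg (fun W ↦ |shellInner φ _ W|) hdirection).trans_le ?_
  refine h.abs_shellInner_le_sq (hcont x₁ c₁) (hcont x₂ c₂) (contDiff_rescale hu x r).continuous
    ha hb hab _ _ heuler ?_
  rw [rescale_homogeneityDefect]
  exact h.shellInner_homogeneityDefect_self (contDiff_rescale hu x r)
    (harmonicOnNhd_rescale hr hharm) hH.ne'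

lemma IsRadialCutoff.exists_hasLineDerivAt_frequency_rescale [Nontrivial V] (h : IsRadialCutoff φ)
    (hM : ∀ z : V, shellWeight φ z ≤ M) (hu : ContDiff ℝ 3 u) (hr : 0 < r)
    (hharm : HarmonicOnNhd u (ball x₁ (9 / 2 * r))) (hdist : dist x₁ x₂ ≤ r / 4)
    (hH₁ : 0 < shellInner φ (rescale u x₁ (r / 4)) (rescale u x₁ (r / 4)))
    (hH₂ : 0 < shellInner φ (rescale u x₂ (r / 4)) (rescale u x₂ (r / 4)))
    (hΛ₁ : frequency φ (rescale u x₁ (4 * r)) ≤ Λ) (hΛ₂ : frequency φ (rescale u x₂ (4 * r)) ≤ Λ)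
    (hx : x ∈ segment ℝ x₁ x₂) :
    ∃ d, HasLineDerivAt ℝ (fun y ↦ frequency φ (rescale u y r)) d x (x₂ - x₁) ∧
      |d| ≤ 2 * ((4 ^ Module.finrank ℝ V * M) ^ 2 * 16 ^ (2 * Λ))
        * (√(frequency φ (rescale u x₁ (4 * r)) - frequency φ (rescale u x₁ (r / 4)))
          + √(frequency φ (rescale u x₂ (4 * r)) - frequency φ (rescale u x₂ (r / 4)))) ^ 2 := by
  have hu2 : ContDiff ℝ 2 u := hu.of_le (by norm_num)
  have hbetween := (mem_segment_iff_wbtw.1 hx).dist_add_dist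
  have hx₁ : dist x x₁ ≤ r / 4 := by rw [dist_comm]; linarith [dist_nonneg (x := x) (y := x₂)]
  have hx₂ : dist x x₂ ≤ r / 4 := by linarith [dist_nonneg (x := x₁) (y := x)]
  have hharm₁ := hharm.mono (ball_subset_ball (by linarith : 4 * r ≤ 9 / 2 * r))
  have hharm₂ := hharm.mono
    (ball_subset_ball' (by rw [dist_comm]; linarith : 4 * r + dist x₂ x₁ ≤ 9 / 2 * r))
  have hharmx := hharm.mono (ball_subset_ball' (by linarith : r + dist x x₁ ≤ 9 / 2 * r))
  have hM0 : 0 ≤ M := (h.shellWeight_nonneg 0).trans (hM 0)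
  have hK0 : 0 ≤ (4 ^ Module.finrank ℝ V * M) ^ 2 * (16 : ℝ) ^ (2 * Λ) := by positivity
  have hH : 0 < shellInner φ (rescale u x r) (rescale u x r) := pos_of_mul_pos_right
    (hH₁.trans_le (h.shellInner_rescale_quarter_le hM hu2 hr hx₁ hharmx)) (by positivity)
  obtain ⟨c₁, hc₁⟩ := h.exists_shellInner_homogeneityDefect_le_pinching hM hu hr hx₁ hharm₁ hH₁ hΛ₁
  obtain ⟨c₂, hc₂⟩ := h.exists_shellInner_homogeneityDefect_le_pinching hM hu hr hx₂ hharm₂ hH₂ hΛ₂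
  obtain ⟨d, hd, hle⟩ := h.exists_hasLineDerivAt_frequency_le_defects hu2 hr hharmx hH hx c₁ c₂
    rfl rfl
  refine ⟨d, hd, hle.trans ?_⟩
  set K := (4 ^ Module.finrank ℝ V * M) ^ 2 * (16 : ℝ) ^ (2 * Λ)
  set H := shellInner φ (rescale u x r) (rescale u x r)
  set W₁ := frequency φ (rescale u x₁ (4 * r)) - frequency φ (rescale u x₁ (r / 4))
  set W₂ := frequency φ (rescale u x₂ (4 * r)) - frequency φ (rescale u x₂ (r / 4))
  have hKH : 0 ≤ K * H := mul_nonneg hK0 hH.le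
  rw [mul_right_comm] at hc₁ hc₂
  calc _ ≤ 2 / H * (√(K * H * W₁) + √(K * H * W₂)) ^ 2 := by gcongr
    _ = 2 / H * (K * H * (√W₁ + √W₂) ^ 2) := by
        rw [Real.sqrt_mul hKH, Real.sqrt_mul hKH, ← mul_add, mul_pow, Real.sq_sqrt hKH]
    _ = 2 * K * (√W₁ + √W₂) ^ 2 := by field_simp

end LineDerivative

section Localization

lemma exists_contDiff_eqOn_ball {V F : Type*} [NormedAddCommGroup V] [NormedSpace ℝ V]
    [HasContDiffBump V] [NormedAddCommGroup F] [NormedSpace ℝ F] {n : ℕ∞} {u : V → F} {x : V}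
    {ρ R : ℝ} (hρ : 0 < ρ) (hρR : ρ < R) (hu : ContDiffOn ℝ n u (ball x R)) :
    ∃ U : V → F, ContDiff ℝ n U ∧ Set.EqOn U u (ball x ρ) := by
  let χ : ContDiffBump x := ⟨ρ, (ρ + R) / 2, hρ, by linarith⟩
  refine ⟨fun y ↦ χ y • u y, contDiff_iff_contDiffAt.2 fun y ↦ ?_, fun y hy ↦ ?_⟩
  · by_cases hy : y ∈ ball x R
    · exact χ.contDiffAt.smul (hu.contDiffAt (isOpen_ball.mem_nhds hy))
    · have hfar : y ∈ (closedBall x ((ρ + R) / 2))ᶜ := fun hmem ↦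
        hy (closedBall_subset_ball (by linarith) hmem)
      have hzero : (fun z ↦ χ z • u z) =ᶠ[nhds y] fun _ ↦ 0 := by
        filter_upwards [isClosed_closedBall.isOpen_compl.mem_nhds hfar] with z hz
        rw [χ.zero_of_le_dist (not_le.1 fun hle ↦ hz hle).le, zero_smul]
      exact contDiffAt_const.congr_of_eventuallyEq hzero
  · change χ y • u y = u y
    rw [χ.one_of_mem_closedBall (ball_subset_closedBall hy), one_smul]

variable {V F : Type*} [NormedAddCommGroup V] [InnerProductSpace ℝ V] [FiniteDimensional ℝ V]
  [NormedAddCommGroup F] [InnerProductSpace ℝ F] {φ : ℝ → ℝ} {u w : V → F}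

lemma harmonicOnNhd_congr_of_isOpen {s : Set V} (hs : IsOpen s) (huw : Set.EqOn u w s)
    (hu : HarmonicOnNhd u s) : HarmonicOnNhd w s := fun y hy ↦
  (harmonicAt_congr_nhds (huw.eventuallyEq_of_mem (hs.mem_nhds hy))).1 (hu y hy)

lemma gradInner_self_congr {z : V} (huw : u =ᶠ[nhds z] w) : gradInner u u z = gradInner w w z := by
  simp only [gradInner, huw.fderiv_eq]

variable [MeasurableSpace V] [BorelSpace V]

namespace IsRadialCutoff

lemma shellInner_self_congr (h : IsRadialCutoff φ) (huw : Set.EqOn u w (ball 0 1)) :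
    shellInner φ u u = shellInner φ w w := by
  refine integral_congr_ae (.of_forall fun z ↦ ?_)
  rcases lt_or_ge ‖z‖ 1 with hz | hz
  · simp only [huw (mem_ball_zero_iff.2 hz)]
  · simp only [h.isBallWeight_shellWeight.eq_zero z hz, mul_zero]

lemma frequency_congr (h : IsRadialCutoff φ) (huw : Set.EqOn u w (ball 0 1)) :
    frequency φ u = frequency φ w := by
  rw [frequency, frequency, h.shellInner_self_congr huw]
  congr 1
  refine integral_congr_ae (.of_forall fun z ↦ ?_)
  rcases lt_or_ge ‖z‖ 1 with hz | hz
  · simp only [gradInner_self_congr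
      (huw.eventuallyEq_of_mem (isOpen_ball.mem_nhds (mem_ball_zero_iff.2 hz)))]
  · simp only [h.eq_zero _ hz, mul_zero]

lemma frequency_nonneg (h : IsRadialCutoff φ) (U : V → F) : 0 ≤ frequency φ U :=
  div_nonneg (h.cutoffEnergy_nonneg U) (h.shellInner_self_nonneg U)

lemma exists_harmonic_extension (h : IsRadialCutoff φ) {n : ℕ∞} {x : V} {ρ R : ℝ} (hρ : 0 < ρ)
    (hρR : ρ < R) (hu : ContDiffOn ℝ n u (ball x R)) (hharm : HarmonicOnNhd u (ball x R)) :
    ∃ U : V → F, ContDiff ℝ n U ∧ HarmonicOnNhd U (ball x ρ) ∧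
      ∀ {y t}, 0 < t → t + dist y x ≤ ρ →
        shellInner φ (rescale u y t) (rescale u y t)
          = shellInner φ (rescale U y t) (rescale U y t) ∧
        frequency φ (rescale u y t) = frequency φ (rescale U y t) := by
  obtain ⟨U, hU, hUu⟩ := exists_contDiff_eqOn_ball hρ hρR hu
  refine ⟨U, hU, harmonicOnNhd_congr_of_isOpen isOpen_ball hUu.symm
    (hharm.mono (ball_subset_ball hρR.le)), fun {y t} ht hy ↦ ?_⟩
  have heq : Set.EqOn (rescale u y t) (rescale U y t) (ball 0 1) := fun z hz ↦
    (hUu (ball_subset_ball' hy (mem_ball_of_mem_unit_ball ht hz))).symm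
  exact ⟨h.shellInner_self_congr heq, h.frequency_congr heq⟩

end IsRadialCutoff

end Localization

lemma sq_sqrt_add_sqrt_le {a b c : ℝ} (ha : a ≤ c) (hb : b ≤ c) :
    (√a + √b) ^ 2 ≤ 2 * √c * (√a + √b) := by
  rw [sq, two_mul]
  gcongr

lemma exists_hasLineDerivAt_inv_norm_smul {V : Type*} [NormedAddCommGroup V] [NormedSpace ℝ V]
    {f : V → ℝ} {x v : V} {d : ℝ} (hd : HasLineDerivAt ℝ f d x v) (hv : v ≠ 0) :
    ∃ d', HasLineDerivAt ℝ f d' x (‖v‖⁻¹ • v) ∧ ‖v‖ * |d'| = |d| := by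
  refine ⟨_, hd.smul ‖v‖⁻¹, ?_⟩
  rw [smul_eq_mul, abs_mul, abs_of_nonneg (by positivity),
    mul_inv_cancel_left₀ (norm_ne_zero_iff.2 hv)]

lemma IsRadialCutoff.exists_forall_hasLineDerivAt_frequency_rescale_le {V : Type*}
    [NormedAddCommGroup V] [InnerProductSpace ℝ V] [FiniteDimensional ℝ V] [Nontrivial V]
    [MeasurableSpace V] [BorelSpace V] {φ : ℝ → ℝ} (h : IsRadialCutoff φ) (Λ : ℝ) :
    ∃ C > 0, ∀ (F : Type*) [NormedAddCommGroup F] [InnerProductSpace ℝ F] (u : V → F) (r : ℝ),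
      0 < r → ∀ x₁ x₂ : V, dist x₁ x₂ ≤ r / 4 →
      ContDiffOn ℝ 3 u (ball x₁ (5 * r)) → HarmonicOnNhd u (ball x₁ (5 * r)) →
      0 < shellInner φ (rescale u x₁ (r / 4)) (rescale u x₁ (r / 4)) →
      0 < shellInner φ (rescale u x₂ (r / 4)) (rescale u x₂ (r / 4)) →
      frequency φ (rescale u x₁ (4 * r)) ≤ Λ → frequency φ (rescale u x₂ (4 * r)) ≤ Λ →
      ∀ x ∈ segment ℝ x₁ x₂,
      ∃ d, HasLineDerivAt ℝ (fun y ↦ frequency φ (rescale u y r)) d x (x₂ - x₁) ∧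
        |d| ≤ C *
          (√(frequency φ (rescale u x₁ (4 * r)) - frequency φ (rescale u x₁ (r / 4)))
            + √(frequency φ (rescale u x₂ (4 * r)) - frequency φ (rescale u x₂ (r / 4)))) ^ 2 := by
  obtain ⟨M, hM0, hM⟩ := (h.isBallWeight_shellWeight (V := V)).exists_le
  refine ⟨2 * ((4 ^ Module.finrank ℝ V * M) ^ 2 * 16 ^ (2 * Λ)), by positivity, ?_⟩
  intro F _ _ u r hr x₁ x₂ hdist hu hharm hH₁ hH₂ hΛ₁ hΛ₂ x hx
  obtain ⟨U, hU, hUharm, hUu⟩ := h.exists_harmonic_extension (n := 3)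
    (by positivity : 0 < 9 / 2 * r) (by linarith : 9 / 2 * r < 5 * r) hu hharm
  have hbetween := (mem_segment_iff_wbtw.1 hx).dist_add_dist
  have hxx₁ : dist x x₁ ≤ r / 4 := by rw [dist_comm]; linarith [dist_nonneg (x := x) (y := x₂)]
  have hnear : (fun y ↦ frequency φ (rescale u y r)) =ᶠ[nhds x]
      fun y ↦ frequency φ (rescale U y r) := by
    filter_upwards [ball_mem_nhds x hr] with y hy
    exact (hUu hr (by linarith [dist_triangle y x x₁, mem_ball.1 hy])).2
  have hq : 0 < r / 4 := by positivity
  have h4 : 0 < 4 * r := by positivity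
  have hUu₁ {t : ℝ} (ht : 0 < t) (htr : t ≤ 4 * r) := hUu (y := x₁) ht
    (by rw [dist_self]; linarith)
  have hUu₂ {t : ℝ} (ht : 0 < t) (htr : t ≤ 4 * r) := hUu (y := x₂) ht
    (by rw [dist_comm]; linarith)
  rw [(hUu₁ hq (by linarith)).1] at hH₁
  rw [(hUu₂ hq (by linarith)).1] at hH₂
  rw [(hUu₁ h4 le_rfl).2] at hΛ₁ ⊢
  rw [(hUu₂ h4 le_rfl).2] at hΛ₂ ⊢
  rw [(hUu₁ hq (by linarith)).2, (hUu₂ hq (by linarith)).2]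
  obtain ⟨d, hd, hle⟩ := h.exists_hasLineDerivAt_frequency_rescale hM hU hr hUharm hdist hH₁ hH₂
    hΛ₁ hΛ₂ hx
  exact ⟨d, hd.congr_of_eventuallyEq hnear, hle⟩

section Euclidean

variable {F : Type*} [NormedAddCommGroup F] [InnerProductSpace ℝ F] {u : E4 → F} {Ω : Set E4}

lemma IsHarmonicOn.contDiffOn (hu : IsHarmonicOn u Ω) {n : ℕ∞} :
    ContDiffOn ℝ n u Ω :=
  hu.1.of_le (mod_cast le_top)

lemma IsHarmonicOn.mono {s : Set E4} (hu : IsHarmonicOn u Ω) (hs : s ⊆ Ω) : IsHarmonicOn u s :=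
  ⟨hu.1.mono hs, fun x hx ↦ hu.2 x (hs hx)⟩

lemma IsHarmonicOn.harmonicOnNhd (hu : IsHarmonicOn u Ω)
    (hΩ : IsOpen Ω) : HarmonicOnNhd u Ω := fun x hx ↦ by
  refine ⟨(hu.contDiffOn (n := 2)).contDiffAt (hΩ.mem_nhds hx), ?_⟩
  filter_upwards [hΩ.mem_nhds hx] with y hy
  rw [laplacian_eq_iteratedFDeriv_orthonormalBasis u (EuclideanSpace.basisFun (Fin 4) ℝ)]
  simpa only [EuclideanSpace.basisFun_apply, Pi.zero_apply] using hu.2 y hy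

lemma gradInner_self_eq_gradSq (u : E4 → F) : gradInner u u = gradSq u := by
  ext y
  simp only [gradInner_eq_sum (EuclideanSpace.basisFun (Fin 4) ℝ), EuclideanSpace.basisFun_apply,
    real_inner_self_eq_norm_sq, gradSq]

lemma norm_add_smul_sub_div {x z : E4} {t : ℝ} (ht : 0 < t) : ‖x + t • z - x‖ / t = ‖z‖ := by
  rw [add_sub_cancel_left, norm_smul, Real.norm_of_nonneg ht.le, mul_div_cancel_left₀ _ ht.ne']

lemma Hphi_eq_shellInner (φ : ℝ → ℝ) (u : E4 → F) (x : E4) {t : ℝ} (ht : 0 < t) :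
    Hphi φ u x t = t ^ 3 * shellInner φ (rescale u x t) (rescale u x t) := by
  have hscale := integral_comp_add_smul
    (fun y ↦ ‖u y‖ ^ 2 * ‖y - x‖⁻¹ * deriv φ (‖y - x‖ / t)) x ht.le
  simp only [norm_add_smul_sub_div ht, finrank_euclideanSpace_fin, smul_eq_mul] at hscale
  have hshell (z : E4) : ⟪rescale u x t z, rescale u x t z⟫ * shellWeight φ z
      = -t * (‖u (x + t • z)‖ ^ 2 * ‖x + t • z - x‖⁻¹ * deriv φ ‖z‖) := by
    rw [add_sub_cancel_left, norm_smul, Real.norm_of_nonneg ht.le, shellWeight,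
      real_inner_self_eq_norm_sq, rescale]
    field_simp
  simp only [shellInner, hshell, integral_const_mul, hscale, Hphi]
  field_simp

lemma Dphi_eq_cutoffEnergy (φ : ℝ → ℝ) (u : E4 → F) (x : E4) {t : ℝ} (ht : 0 < t) :
    Dphi φ u x t = t ^ 2 * cutoffEnergy φ (rescale u x t) := by
  have hscale := integral_comp_add_smul (fun y ↦ gradSq u y * φ (‖y - x‖ / t)) x ht.le
  simp only [norm_add_smul_sub_div ht, finrank_euclideanSpace_fin, smul_eq_mul] at hscale
  simp only [cutoffEnergy, gradInner_rescale, gradInner_self_eq_gradSq, mul_assoc,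
    integral_const_mul, hscale, Dphi]
  field_simp

lemma Nphi_eq_frequency (φ : ℝ → ℝ) (u : E4 → F) (x : E4) {t : ℝ} (ht : 0 < t) :
    Nphi φ u x t = frequency φ (rescale u x t) := by
  rw [Nphi, Dphi_eq_cutoffEnergy φ u x ht, Hphi_eq_shellInner φ u x ht, ← mul_assoc, ← pow_succ',
    mul_div_mul_left _ _ (pow_ne_zero 3 ht.ne'), frequency]

lemma Hphi_pos_iff {φ : ℝ → ℝ} {x : E4} {t : ℝ} (ht : 0 < t) :
    0 < Hphi φ u x t ↔ 0 < shellInner φ (rescale u x t) (rescale u x t) := by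
  rw [Hphi_eq_shellInner φ u x ht, mul_pos_iff_of_pos_left (pow_pos ht 3)]

lemma IsRadialCutoff.Nphi_nonneg {φ : ℝ → ℝ} (h : IsRadialCutoff φ) (u : E4 → F) (x : E4) {t : ℝ}
    (ht : 0 < t) : 0 ≤ Nphi φ u x t := by
  rw [Nphi_eq_frequency φ u x ht]
  exact h.frequency_nonneg _

end Euclidean

theorem stmt_18_general {φ : ℝ → ℝ} (h : IsRadialCutoff φ) (Λ : ℝ) :
    ∃ C > 0, ∀ (F : Type*) [NormedAddCommGroup F] [InnerProductSpace ℝ F] (u : E4 → F) (r : ℝ),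
      0 < r → ∀ x₁ x₂ : E4, x₁ ≠ x₂ → dist x₁ x₂ ≤ r / 4 → IsHarmonicOn u (ball x₁ (5 * r)) →
      0 < Hphi φ u x₁ (r / 4) → 0 < Hphi φ u x₂ (r / 4) →
      Nphi φ u x₁ (4 * r) ≤ Λ → Nphi φ u x₂ (4 * r) ≤ Λ →
      ∀ x ∈ segment ℝ x₁ x₂,
      ∃ d, HasLineDerivAt ℝ (fun y ↦ Nphi φ u y r) d x (‖x₂ - x₁‖⁻¹ • (x₂ - x₁)) ∧
        dist x₁ x₂ * |d| ≤
          C * (√(Nphi φ u x₁ (4 * r) - Nphi φ u x₁ (r / 4))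
            + √(Nphi φ u x₂ (4 * r) - Nphi φ u x₂ (r / 4))) ^ 2 := by
  obtain ⟨C, hC, hmain⟩ := h.exists_forall_hasLineDerivAt_frequency_rescale_le (V := E4) Λ
  refine ⟨C, hC, fun F _ _ u r hr x₁ x₂ hne hdist hu hH₁ hH₂ hΛ₁ hΛ₂ x hx ↦ ?_⟩
  have hq : 0 < r / 4 := by positivity
  have h4 : 0 < 4 * r := by positivity
  have hN {t : ℝ} (ht : 0 < t) (y : E4) := Nphi_eq_frequency φ u y ht
  obtain ⟨d, hd, hle⟩ := hmain F u r hr x₁ x₂ hdist hu.contDiffOn (hu.harmonicOnNhd isOpen_ball)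
    ((Hphi_pos_iff hq).1 hH₁) ((Hphi_pos_iff hq).1 hH₂) (hN h4 x₁ ▸ hΛ₁) (hN h4 x₂ ▸ hΛ₂) x hx
  simp only [← hN hr, ← hN hq, ← hN h4] at hd hle
  obtain ⟨d', hd', hdd'⟩ := exists_hasLineDerivAt_inv_norm_smul hd (sub_ne_zero.2 hne.symm)
  exact ⟨d', hd', by rwa [dist_comm, dist_eq_norm, hdd']⟩

end Development

/-- Flat-case analogue of Proposition 6.1: the frequency pinching estimate along a
segment. Here `W_{r/4}^{4r}(x) = N_φ(x,4r) − N_φ(x,r/4)` and `∂_v N_φ(x,r)` is the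
directional derivative of `N_φ(·,r)` at `x` in the unit direction `v` of the segment. -/
theorem stmt_18 (φ : ℝ → ℝ) (hφs : ContDiff ℝ (⊤ : ℕ∞) φ) (hφa : Antitone φ)
    (hφ1 : ∀ t ≤ (3/4 : ℝ), φ t = 1) (hφ0 : ∀ t, (1:ℝ) ≤ t → φ t = 0)
    (Λ : ℝ) (hΛ : 0 < Λ) :
    ∃ C > (0:ℝ),
      ∀ (F : Type) [NormedAddCommGroup F] [InnerProductSpace ℝ F] [FiniteDimensional ℝ F],
      ∀ (u : E4 → F) (Ω : Set E4), IsOpen Ω → IsHarmonicOn u Ω →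
      ∀ (r : ℝ), 0 < r → ∀ x₁ x₂ : E4, x₁ ≠ x₂ → dist x₁ x₂ ≤ r / 4 →
      closedBall x₁ (6 * r) ⊆ Ω →
      (∀ t ∈ Set.Ioc (0:ℝ) (4 * r),
        (0 < Hphi φ u x₁ t ∧ Nphi φ u x₁ t ≤ Λ) ∧
        (0 < Hphi φ u x₂ t ∧ Nphi φ u x₂ t ≤ Λ)) →
      (∀ x' ∈ segment ℝ x₁ x₂, 0 < Hphi φ u x' r) →
      ∀ x ∈ segment ℝ x₁ x₂,
      ∃ d : ℝ,
        HasDerivAt (fun t : ℝ => Nphi φ u (x + t • (‖x₂ - x₁‖⁻¹ • (x₂ - x₁))) r) d 0 ∧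
        dist x₁ x₂ * |d| ≤
          C * (Real.sqrt (Nphi φ u x₁ (4 * r) - Nphi φ u x₁ (r / 4)) +
               Real.sqrt (Nphi φ u x₂ (4 * r) - Nphi φ u x₂ (r / 4))) := by
  have h : IsRadialCutoff φ := ⟨hφs.of_le (by simp), hφa, hφ1, hφ0⟩
  obtain ⟨C, hC, hmain⟩ := stmt_18_general h Λ
  refine ⟨C * (2 * √Λ), by positivity, fun F _ _ _ u Ω _ hu r hr x₁ x₂ hne h12 hb hHN _ x hx ↦ ?_⟩
  have hball : ball x₁ (5 * r) ⊆ Ω :=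
    (ball_subset_closedBall.trans (closedBall_subset_closedBall (by linarith))).trans hb
  obtain ⟨⟨hH₁, -⟩, hH₂, -⟩ := hHN (r / 4) ⟨by positivity, by linarith⟩
  obtain ⟨⟨-, hΛ₁⟩, -, hΛ₂⟩ := hHN (4 * r) ⟨by positivity, le_rfl⟩
  obtain ⟨d, hd, hle⟩ := hmain F u r hr x₁ x₂ hne h12 (hu.mono hball) hH₁ hH₂ hΛ₁ hΛ₂ x hx
  have hW (y : E4) (hy : Nphi φ u y (4 * r) ≤ Λ) := (sub_le_self _
    (h.Nphi_nonneg u y (by positivity : 0 < r / 4))).trans hy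
  refine ⟨d, hd, hle.trans ?_⟩
  rw [mul_assoc]
  exact mul_le_mul_of_nonneg_left (sq_sqrt_add_sqrt_le (hW x₁ hΛ₁) (hW x₂ hΛ₂)) hC.le
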